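/- arXiv:1810.02846 — 2 statements merged into one kernel-verified Lean document; each statement's English description precedes it below -/
import Mathlib

section
/- For every T = (𝐛,𝐫,𝐬) ∈ Tri^B_0(n,d) and every (T¹,T²) ∈ Spl(T), the integer [T¹]^!_𝔠·[T²]^!_𝔠 divides [T]^!_𝔠, and ∇(η_T) = Σ_{(T¹,T²) ∈ Spl(T)} (−1)^{⟨σ^T_{T¹,T²};𝐛⟩} ([T]^!_𝔠 / ([T¹]^!_𝔠·[T²]^!_𝔠)) η_{T¹} ⊗ η_{T²}. In particular, ∇(T^A_𝔞(n,d)) ⊆ ⊕_{l=0}^d T^A_𝔞(n,l) ⊗ T^A_𝔞(n,d−l), so T^A_𝔞(n) := ⊕_{d≥0} T^A_𝔞(n,d) is a sub-supercoalgebra of ⊕_{d≥0} M_n(A)^{⊗d}. -/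
open Finset

open scoped Classical TensorProduct

noncomputable section

namespace GS

/-- A *good pair* `(A, 𝔞)`: a `𝕜`-superalgebra `A = ev ⊕ od` which is free as a
`𝕜`-supermodule, together with a subalgebra `𝔞 = aa ⊆ A₀` such that `𝔞` and `A/𝔞` are free,
a complement `𝔠 = cc` of `𝔞` in `A₀`, and an `(A,𝔞)`-basis `B = B_𝔞 ⊔ B_𝔠 ⊔ B_1`
(encoded by `bas : Basis β 𝕜 A` with the partition `part : β → Fin 3`,
where `0` = `B_𝔞`, `1` = `B_𝔠`, `2` = `B_1`). -/
structure GoodPair (𝕜 A β : Type) [CommRing 𝕜] [NonUnitalRing A] [Module 𝕜 A] : Type where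
  ev : Submodule 𝕜 A
  od : Submodule 𝕜 A
  compl : IsCompl ev od
  mul_ee : ∀ a ∈ ev, ∀ b ∈ ev, a * b ∈ ev
  mul_eo : ∀ a ∈ ev, ∀ b ∈ od, a * b ∈ od
  mul_oe : ∀ a ∈ od, ∀ b ∈ ev, a * b ∈ od
  mul_oo : ∀ a ∈ od, ∀ b ∈ od, a * b ∈ ev
  free_ev : Module.Free 𝕜 ev
  free_od : Module.Free 𝕜 od
  aa : Submodule 𝕜 A
  aa_le_ev : aa ≤ ev
  aa_mul : ∀ a ∈ aa, ∀ b ∈ aa, a * b ∈ aa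
  free_aa : Module.Free 𝕜 aa
  free_quot : Module.Free 𝕜 (A ⧸ aa)
  cc : Submodule 𝕜 A
  aa_inf_cc : aa ⊓ cc = ⊥
  aa_sup_cc : aa ⊔ cc = ev
  bas : Module.Basis β 𝕜 A
  part : β → Fin 3
  bas_mem_aa : ∀ i, part i = 0 → bas i ∈ aa
  bas_mem_cc : ∀ i, part i = 1 → bas i ∈ cc
  bas_mem_od : ∀ i, part i = 2 → bas i ∈ od

variable {𝕜 A β : Type} [CommRing 𝕜] [NonUnitalRing A] [Module 𝕜 A]

/-- An element is homogeneous if it lies in the even or the odd part. -/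
def Homog (P : GoodPair 𝕜 A β) (a : A) : Prop := a ∈ P.ev ∨ a ∈ P.od

/-- `H`, the set of nonzero homogeneous elements of `A`. -/
def Hset (P : GoodPair 𝕜 A β) : Set A := {a | Homog P a ∧ a ≠ 0}

/-- `⟨𝐚,𝐜⟩ = #{(k,l) : k > l, a_k odd, c_l odd}` (the Koszul sign count). -/
def koz (od : Submodule 𝕜 A) {d : ℕ} (a c : Fin d → A) : ℕ :=
  (univ.filter fun kl : Fin d × Fin d => kl.2 < kl.1 ∧ a kl.1 ∈ od ∧ c kl.2 ∈ od).card

/-- `⟨σ;𝐚⟩ = #{(k,l) : k < l, σ⁻¹k > σ⁻¹l, a_k and a_l odd}`. -/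
def sgnc (od : Submodule 𝕜 A) {d : ℕ} (σ : Equiv.Perm (Fin d)) (a : Fin d → A) : ℕ :=
  (univ.filter fun kl : Fin d × Fin d =>
    kl.1 < kl.2 ∧ σ⁻¹ kl.2 < σ⁻¹ kl.1 ∧ a kl.1 ∈ od ∧ a kl.2 ∈ od).card

/-- `⟨𝐚,𝐫,𝐬⟩ = #{(k,l) : k < l, a_k, a_l odd, (a_k,r_k,s_k) > (a_l,r_l,s_l)}` with respect to
the fixed total order `ord` on `A × [1,n] × [1,n]`. -/
def ang {n : ℕ} (od : Submodule 𝕜 A) (ord : LinearOrder (A × Fin n × Fin n))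
    {d : ℕ} (a : Fin d → A) (r s : Fin d → Fin n) : ℕ :=
  (univ.filter fun kl : Fin d × Fin d =>
    kl.1 < kl.2 ∧ a kl.1 ∈ od ∧ a kl.2 ∈ od ∧
      ord.lt (a kl.2, r kl.2, s kl.2) (a kl.1, r kl.1, s kl.1)).card

/-- `(𝐚,𝐫,𝐬) ∈ Tri^H(n,d)`: all entries are nonzero homogeneous, and a repeated entry
triple forces evenness. -/
def IsTriH (P : GoodPair 𝕜 A β) {n d : ℕ} (a : Fin d → A) (r s : Fin d → Fin n) : Prop :=
  (∀ k, a k ∈ Hset P) ∧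
    ∀ k l : Fin d, k ≠ l → (a k, r k, s k) = (a l, r l, s l) → a k ∈ P.ev

/-- `(𝐛,𝐫,𝐬) ∈ Tri^B(n,d)` for words of basis elements. -/
def IsTriB (P : GoodPair 𝕜 A β) {n d : ℕ} (b : Fin d → β) (r s : Fin d → Fin n) : Prop :=
  ∀ k l : Fin d, k ≠ l → ((b k, r k, s k) : β × Fin n × Fin n) = (b l, r l, s l) →
    P.part (b k) ≠ 2

/-- Minimal length representatives of the cosets `(S_e × S_f)\S_{e+f}`. -/
def IsShuffle (e f : ℕ) (σ : Equiv.Perm (Fin (e + f))) : Prop :=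
  (∀ k l : Fin (e + f), k < l → (l : ℕ) < e → σ⁻¹ k < σ⁻¹ l) ∧
  (∀ k l : Fin (e + f), k < l → e ≤ (k : ℕ) → σ⁻¹ k < σ⁻¹ l)

/-- The tower of superalgebras `M_n(A)^{⊗d}`, `d ≥ 0`, axiomatised.  `X a r s` is the pure
tensor `ξ^{a_1}_{r_1,s_1} ⊗ ⋯ ⊗ ξ^{a_d}_{r_d,s_d}` of matrix units; it is multilinear in the
`A`-entries, the pure tensors of basis elements form a basis, multiplication is the sign-twisted
(Koszul) componentwise one, `act` is the right action of the symmetric groups by superalgebra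
automorphisms, `evT/odT` is the induced supermodule structure, `star` is the `*`-(shuffle)
product and `nab` gives the components of the deconcatenation coproduct `∇`. -/
structure Tower (𝕜 A β : Type) [CommRing 𝕜] [NonUnitalRing A] [Module 𝕜 A]
    (n : ℕ) (T : ℕ → Type) [∀ e, NonUnitalRing (T e)] [∀ e, Module 𝕜 (T e)]
    (P : GoodPair 𝕜 A β) : Type where
  X : ∀ {e : ℕ}, (Fin e → A) → (Fin e → Fin n) → (Fin e → Fin n) → T e
  X_update_add : ∀ {e : ℕ} (a : Fin e → A) (r s : Fin e → Fin n) (k : Fin e) (x y : A),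
    X (Function.update a k (x + y)) r s
      = X (Function.update a k x) r s + X (Function.update a k y) r s
  X_update_smul : ∀ {e : ℕ} (a : Fin e → A) (r s : Fin e → Fin n) (k : Fin e) (c : 𝕜) (x : A),
    X (Function.update a k (c • x)) r s = c • X (Function.update a k x) r s
  bas : ∀ e : ℕ, Module.Basis ((Fin e → β) × (Fin e → Fin n) × (Fin e → Fin n)) 𝕜 (T e)
  bas_eq : ∀ (e : ℕ) (b : Fin e → β) (r s : Fin e → Fin n),
    bas e (b, r, s) = X (fun k => P.bas (b k)) r s
  X_mul : ∀ {e : ℕ} (a c : Fin e → A) (r s t u : Fin e → Fin n),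
    (∀ k, Homog P (a k)) → (∀ k, Homog P (c k)) →
    X a r s * X c t u
      = if s = t then ((-1 : ℤ) ^ koz P.od a c) • X (fun k => a k * c k) r u else 0
  act : ∀ {e : ℕ}, Equiv.Perm (Fin e) → T e →ₗ[𝕜] T e
  act_act : ∀ {e : ℕ} (σ τ : Equiv.Perm (Fin e)) (x : T e), act τ (act σ x) = act (σ * τ) x
  act_mul : ∀ {e : ℕ} (σ : Equiv.Perm (Fin e)) (x y : T e), act σ (x * y) = act σ x * act σ y
  act_X : ∀ {e : ℕ} (σ : Equiv.Perm (Fin e)) (a : Fin e → A) (r s : Fin e → Fin n),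
    (∀ k, Homog P (a k)) →
    act σ (X a r s) = ((-1 : ℤ) ^ sgnc P.od σ a) • X (a ∘ σ) (r ∘ σ) (s ∘ σ)
  evT : ∀ e : ℕ, Submodule 𝕜 (T e)
  odT : ∀ e : ℕ, Submodule 𝕜 (T e)
  complT : ∀ e : ℕ, IsCompl (evT e) (odT e)
  X_mem_evT : ∀ {e : ℕ} (a : Fin e → A) (r s : Fin e → Fin n), (∀ k, Homog P (a k)) →
    Even (univ.filter fun k => a k ∈ P.od).card → X a r s ∈ evT e
  X_mem_odT : ∀ {e : ℕ} (a : Fin e → A) (r s : Fin e → Fin n), (∀ k, Homog P (a k)) →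
    ¬ Even (univ.filter fun k => a k ∈ P.od).card → X a r s ∈ odT e
  star : ∀ {e f : ℕ}, T e →ₗ[𝕜] T f →ₗ[𝕜] T (e + f)
  star_X : ∀ {e f : ℕ} (a : Fin e → A) (r s : Fin e → Fin n)
      (c : Fin f → A) (t u : Fin f → Fin n),
    star (X a r s) (X c t u)
      = ∑ σ ∈ univ.filter (IsShuffle e f),
          act σ (X (Fin.append a c) (Fin.append r t) (Fin.append s u))
  nab : ∀ e f : ℕ, T (e + f) →ₗ[𝕜] TensorProduct 𝕜 (T e) (T f)
  nab_X : ∀ (e f : ℕ) (a : Fin (e + f) → A) (r s : Fin (e + f) → Fin n),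
    nab e f (X a r s)
      = (X (a ∘ Fin.castAdd f) (r ∘ Fin.castAdd f) (s ∘ Fin.castAdd f))
          ⊗ₜ[𝕜] (X (a ∘ Fin.natAdd e) (r ∘ Fin.natAdd e) (s ∘ Fin.natAdd e))

variable {n : ℕ} {T : ℕ → Type} [∀ e, NonUnitalRing (T e)] [∀ e, Module 𝕜 (T e)]

/-- `ξ^𝐚_{𝐫,𝐬}`, the signed sum of the pure tensors over the `S_d`-orbit of `(𝐚,𝐫,𝐬)`. -/
def xiH {P : GoodPair 𝕜 A β} (D : Tower 𝕜 A β n T P) (ord : LinearOrder (A × Fin n × Fin n))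
    {d : ℕ} (a : Fin d → A) (r s : Fin d → Fin n) : T d :=
  ∑ w ∈ (univ.image fun σ : Equiv.Perm (Fin d) => (a ∘ σ, r ∘ σ, s ∘ σ)),
    ((-1 : ℤ) ^ (ang P.od ord a r s + ang P.od ord w.1 w.2.1 w.2.2)) • D.X w.1 w.2.1 w.2.2

/-- `ξ^𝐛_{𝐫,𝐬}` for a word `𝐛` of basis elements. -/
def xiB {P : GoodPair 𝕜 A β} (D : Tower 𝕜 A β n T P) (ord : LinearOrder (A × Fin n × Fin n))
    {d : ℕ} (b : Fin d → β) (r s : Fin d → Fin n) : T d :=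
  xiH D ord (fun k => P.bas (b k)) r s

/-- `[𝐛,𝐫,𝐬]^b_{r,s}`, the multiplicity of an entry triple in a word triple. -/
def mco {n d : ℕ} (b : Fin d → β) (r s : Fin d → Fin n) (w : β × Fin n × Fin n) : ℕ :=
  (univ.filter fun k => ((b k, r k, s k) : β × Fin n × Fin n) = w).card

/-- `∏ ([𝐛,𝐫,𝐬]^b_{r,s})!` over the entry triples whose basis element satisfies `sel`
(e.g. `sel i = (part i = 1)` gives `[𝐛,𝐫,𝐬]^!_𝔠`). -/
def facSel (sel : β → Prop) {n d : ℕ} (b : Fin d → β) (r s : Fin d → Fin n) : ℕ :=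
  ∏ w ∈ ((univ.image fun k => ((b k, r k, s k) : β × Fin n × Fin n)).filter fun w => sel w.1),
    Nat.factorial (mco b r s w)

/-- `η^𝐛_{𝐫,𝐬} := [𝐛,𝐫,𝐬]^!_𝔠 • ξ^𝐛_{𝐫,𝐬}`. -/
def eta {P : GoodPair 𝕜 A β} (D : Tower 𝕜 A β n T P) (ord : LinearOrder (A × Fin n × Fin n))
    {d : ℕ} (b : Fin d → β) (r s : Fin d → Fin n) : T d :=
  facSel (fun i => P.part i = 1) b r s • xiB D ord b r s

/-- `S^A(n,d) = (M_n(A)^{⊗d})^{S_d}`, the invariants. -/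
def SchurS {P : GoodPair 𝕜 A β} (D : Tower 𝕜 A β n T P) (d : ℕ) : Submodule 𝕜 (T d) where
  carrier := {x | ∀ σ : Equiv.Perm (Fin d), D.act σ x = x}
  add_mem' := by
    intro x y hx hy σ
    rw [map_add, hx σ, hy σ]
  zero_mem' := by
    intro σ; exact map_zero _
  smul_mem' := by
    intro c x hx σ
    rw [map_smul, hx σ]

/-- The generalized Schur algebra `T^A_𝔞(n,d)`, the `𝕜`-span of the `η^𝐛_{𝐫,𝐬}`,
`(𝐛,𝐫,𝐬) ∈ Tri^B(n,d)`. -/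
def SchurT {P : GoodPair 𝕜 A β} (D : Tower 𝕜 A β n T P) (ord : LinearOrder (A × Fin n × Fin n))
    (d : ℕ) : Submodule 𝕜 (T d) :=
  Submodule.span 𝕜 {x | ∃ b r s, IsTriB P b r s ∧ x = eta D ord b r s}

/-- `S^𝔞(n,d) = (M_n(𝔞)^{⊗d})^{S_d} ⊆ S^A(n,d)`. -/
def SchurA {P : GoodPair 𝕜 A β} (D : Tower 𝕜 A β n T P) (d : ℕ) : Submodule 𝕜 (T d) :=
  Submodule.span 𝕜 {x | ∃ a r s, (∀ k, a k ∈ P.aa) ∧ x = D.X a r s} ⊓ SchurS D d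

/-- `ξ^f = E^f ⊗ ⋯ ⊗ E^f` for `f ∈ A`. -/
def xiIdem {P : GoodPair 𝕜 A β} (D : Tower 𝕜 A β n T P) (f : A) (d : ℕ) : T d :=
  ∑ r : Fin d → Fin n, D.X (fun _ => f) r r

/-- Transport along an equality of degrees. -/
def tcast {e f : ℕ} (h : e = f) : T e ≃ₗ[𝕜] T f := by
  subst h; exact LinearEquiv.refl 𝕜 (T e)

/-- Iterated `*`-product `x_1 * x_2 * ⋯ * x_d` of degree-one pure tensors read off from a
word (associated to the left). -/
def starIter {P : GoodPair 𝕜 A β} (D : Tower 𝕜 A β n T P) :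
    ∀ (e : ℕ), (Fin e → A) → (Fin e → Fin n) → (Fin e → Fin n) → T e
  | 0, _, _, _ => D.X Fin.elim0 Fin.elim0 Fin.elim0
  | (e + 1), a, r, s =>
      D.star (starIter D e (a ∘ Fin.castSucc) (r ∘ Fin.castSucc) (s ∘ Fin.castSucc))
        (D.X (fun _ : Fin 1 => a (Fin.last e)) (fun _ => r (Fin.last e)) (fun _ => s (Fin.last e)))

/-- Iterated `*`-product of blockwise given elements. -/
def starBlocks {P : GoodPair 𝕜 A β} (D : Tower 𝕜 A β n T P) :
    ∀ (q : ℕ) (sz : Fin q → ℕ), (∀ m, T (sz m)) → T (∑ m, sz m)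
  | 0, sz, _ => cast (congrArg T (Fin.sum_univ_zero sz).symm) (D.X Fin.elim0 Fin.elim0 Fin.elim0)
  | (q + 1), sz, x =>
      cast (congrArg T (Fin.sum_univ_castSucc sz).symm)
        (D.star (starBlocks D q (fun m => sz m.castSucc) (fun m => x m.castSucc))
          (x (Fin.last q)))

/-- Concatenation of a tuple of words of lengths `sz 0, …, sz (q-1)`. -/
def concatB {α : Type} : ∀ {q : ℕ} (sz : Fin q → ℕ), (∀ m, Fin (sz m) → α) → Fin (∑ m, sz m) → α
  | 0, sz, _ => fun k => Fin.elim0 (cast (congrArg Fin (Fin.sum_univ_zero sz)) k)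
  | (q + 1), sz, f => fun k =>
      Fin.append (concatB (fun m => sz m.castSucc) (fun m => f m.castSucc)) (f (Fin.last q))
        (cast (congrArg Fin (Fin.sum_univ_castSucc sz)) k)

/-- A triple of words `(𝐛,𝐫,𝐬)`. -/
abbrev WordTriple (β : Type) (n d : ℕ) : Type :=
  (Fin d → β) × (Fin d → Fin n) × (Fin d → Fin n)

/-- The diagonal right place-permutation action on triples of words. -/
def wAct {d : ℕ} (w : WordTriple β n d) (σ : Equiv.Perm (Fin d)) : WordTriple β n d :=
  (w.1 ∘ σ, w.2.1 ∘ σ, w.2.2 ∘ σ)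

/-- The `k`-th entry triple `(b_k, r_k, s_k)` (with `b_k` realized in `A`). -/
def entryAt (P : GoodPair 𝕜 A β) {n d : ℕ} (w : WordTriple β n d) (k : Fin d) :
    A × Fin n × Fin n :=
  (P.bas (w.1 k), w.2.1 k, w.2.2 k)

/-- The lexicographic order on triples of words induced by the total order `ord`. -/
def wordLE (P : GoodPair 𝕜 A β) {n : ℕ} (ord : LinearOrder (A × Fin n × Fin n)) {d : ℕ}
    (w w' : WordTriple β n d) : Prop :=
  (∀ k, entryAt P w k = entryAt P w' k) ∨
    ∃ l : Fin d, (∀ k, k < l → entryAt P w k = entryAt P w' k) ∧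
      ord.lt (entryAt P w l) (entryAt P w' l)

/-- `Tri^B_0(n,d)`: the lexicographically minimal representatives of the `S_d`-orbits on
`Tri^B(n,d)`. -/
def IsTri0 (P : GoodPair 𝕜 A β) {n : ℕ} (ord : LinearOrder (A × Fin n × Fin n)) {d : ℕ}
    (w : WordTriple β n d) : Prop :=
  IsTriB P w.1 w.2.1 w.2.2 ∧ ∀ σ : Equiv.Perm (Fin d), wordLE P ord w (wAct w σ)

/-- The first `l` letters of each word. -/
def firstW {d : ℕ} (l : ℕ) (hl : l ≤ d) (w : WordTriple β n d) : WordTriple β n l :=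
  (fun k => w.1 ⟨k, lt_of_lt_of_le k.isLt hl⟩,
   fun k => w.2.1 ⟨k, lt_of_lt_of_le k.isLt hl⟩,
   fun k => w.2.2 ⟨k, lt_of_lt_of_le k.isLt hl⟩)

/-- The last `d - l` letters of each word. -/
def lastW {d : ℕ} (l : ℕ) (hl : l ≤ d) (w : WordTriple β n d) : WordTriple β n (d - l) :=
  (fun k => w.1 ⟨l + (k : ℕ), by have := k.isLt; omega⟩,
   fun k => w.2.1 ⟨l + (k : ℕ), by have := k.isLt; omega⟩,
   fun k => w.2.2 ⟨l + (k : ℕ), by have := k.isLt; omega⟩)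

/-- Concatenation of words. -/
def appF {α : Type} {d : ℕ} (l : ℕ) (hl : l ≤ d) (f : Fin l → α) (g : Fin (d - l) → α) :
    Fin d → α :=
  fun k => if hk : (k : ℕ) < l then f ⟨k, hk⟩ else g ⟨(k : ℕ) - l, by have := k.isLt; omega⟩

/-- Concatenation `T¹T²` of two triples of words. -/
def concatW {d : ℕ} (l : ℕ) (hl : l ≤ d) (p : WordTriple β n l × WordTriple β n (d - l)) :
    WordTriple β n d :=
  (appF l hl p.1.1 p.2.1, appF l hl p.1.2.1 p.2.2.1, appF l hl p.1.2.2 p.2.2.2)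

/-- `Spl_l(T)`, the set of `l`-splits of `T ∈ Tri^B_0(n,d)`. -/
def splitsF (P : GoodPair 𝕜 A β) {n : ℕ} (ord : LinearOrder (A × Fin n × Fin n)) {d : ℕ}
    (l : ℕ) (hl : l ≤ d) (w : WordTriple β n d) :
    Finset (WordTriple β n l × WordTriple β n (d - l)) :=
  (univ.image fun σ : Equiv.Perm (Fin d) =>
      (firstW l hl (wAct w σ), lastW l hl (wAct w σ))).filter
    fun p => IsTri0 P ord p.1 ∧ IsTri0 P ord p.2

/-- The number of inversions (= Coxeter length) of a permutation. -/
def invCount {d : ℕ} (σ : Equiv.Perm (Fin d)) : ℕ :=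
  (univ.filter fun kl : Fin d × Fin d => kl.1 < kl.2 ∧ σ kl.2 < σ kl.1).card

/-- The submodule `{x | x·ε = x}` (for an idempotent `ε` this is `R·ε`). -/
def rfix (𝕜 : Type) {R : Type} [CommRing 𝕜] [NonUnitalRing R] [Module 𝕜 R]
    [IsScalarTower 𝕜 R R] (ε : R) : Submodule 𝕜 R where
  carrier := {x | x * ε = x}
  add_mem' := by
    intro x y hx hy
    simp only [Set.mem_setOf_eq] at *
    rw [add_mul, hx, hy]
  zero_mem' := by simp
  smul_mem' := by
    intro c x hx
    simp only [Set.mem_setOf_eq] at *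
    rw [smul_mul_assoc, hx]

/-- Right `εSε`-module endomorphism property for a map of `S·ε = M ⊓ rfix ε`,
where `S` is the (possibly non-unital) algebra realized as the submodule `M` of `R`. -/
def IsEquivar (𝕜 : Type) {R : Type} [CommRing 𝕜] [NonUnitalRing R] [Module 𝕜 R]
    [IsScalarTower 𝕜 R R] (M : Submodule 𝕜 R) (ε : R)
    (f : ↥(M ⊓ rfix 𝕜 ε) →ₗ[𝕜] ↥(M ⊓ rfix 𝕜 ε)) : Prop :=
  ∀ (x : ↥(M ⊓ rfix 𝕜 ε)) (c : R), c ∈ M → ε * c * ε = c →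
    ∀ h : (x : R) * c ∈ M ⊓ rfix 𝕜 ε,
      ((f ⟨(x : R) * c, h⟩ : ↥(M ⊓ rfix 𝕜 ε)) : R) = (f x : R) * c

/-- `ε` is a *double centralizer idempotent* for the algebra `M ⊆ R`: the left
multiplication map `λ : M → End_{εMε}(Mε)` is bijective. -/
def IsDCI (𝕜 : Type) {R : Type} [CommRing 𝕜] [NonUnitalRing R] [Module 𝕜 R]
    [IsScalarTower 𝕜 R R] (M : Submodule 𝕜 R) (ε : R) : Prop :=
  (∀ s ∈ M, ∀ s' ∈ M, (∀ x ∈ M ⊓ rfix 𝕜 ε, s * x = s' * x) → s = s') ∧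
  (∀ f : ↥(M ⊓ rfix 𝕜 ε) →ₗ[𝕜] ↥(M ⊓ rfix 𝕜 ε), IsEquivar 𝕜 M ε f →
    ∃ s ∈ M, ∀ x : ↥(M ⊓ rfix 𝕜 ε), (f x : R) = s * (x : R))

/-! ### Combinatorics of words -/

section Comb

variable {E : Type}

/-- The rearrangements of a word. -/
def orb {d : ℕ} (w : Fin d → E) : Finset (Fin d → E) :=
  univ.image fun σ : Equiv.Perm (Fin d) => w ∘ σ

/-- The multiplicity of a letter in a word. -/
def cnt {d : ℕ} (w : Fin d → E) (e : E) : ℕ := ∑ k, if w k = e then 1 else 0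

/-- Initial subword. -/
def fstU {d : ℕ} (l : ℕ) (hl : l ≤ d) (w : Fin d → E) : Fin l → E :=
  fun k => w ⟨k, lt_of_lt_of_le k.isLt hl⟩

/-- Final subword. -/
def lstU {d : ℕ} (l : ℕ) (hl : l ≤ d) (w : Fin d → E) : Fin (d - l) → E :=
  fun k => w ⟨l + (k : ℕ), by have := k.isLt; omega⟩

/-- Number of inversions between odd letters. -/
def inv (O : E → Prop) (lt : E → E → Prop) {d : ℕ} (w : Fin d → E) : ℕ :=
  ∑ i, ∑ j, if i < j ∧ O (w i) ∧ O (w j) ∧ lt (w j) (w i) then 1 else 0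

/-- Number of inversions between two words. -/
def crs (O : E → Prop) (lt : E → E → Prop) {d e : ℕ} (u : Fin d → E) (v : Fin e → E) : ℕ :=
  ∑ i, ∑ j, if O (u i) ∧ O (v j) ∧ lt (v j) (u i) then 1 else 0

lemma inv_card (O : E → Prop) (lt : E → E → Prop) {d : ℕ} (w : Fin d → E) :
    inv O lt w = (univ.filter fun ij : Fin d × Fin d =>
      ij.1 < ij.2 ∧ O (w ij.1) ∧ O (w ij.2) ∧ lt (w ij.2) (w ij.1)).card := by
  unfold inv
  rw [Finset.card_filter, ← Finset.univ_product_univ, Finset.sum_product]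

lemma mem_orb {d : ℕ} {w u : Fin d → E} :
    u ∈ orb w ↔ ∃ σ : Equiv.Perm (Fin d), w ∘ σ = u := by
  simp [orb]

lemma mem_orb_iff_cnt {d : ℕ} {w u : Fin d → E} :
    u ∈ orb w ↔ ∀ e, cnt u e = cnt w e := by
  rw [mem_orb]
  constructor
  · rintro ⟨σ, rfl⟩ e
    exact Equiv.sum_comp σ (fun k => if w k = e then 1 else 0)
  · intro h
    have h2 : ∀ e, Nonempty ({a // u a = e} ≃ {a // w a = e}) := by
      intro e
      refine ⟨Fintype.equivOfCardEq ?_⟩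
      have := h e
      simp only [cnt, Finset.sum_boole, Nat.cast_id] at this
      rw [Fintype.card_subtype, Fintype.card_subtype]
      exact this
    have f := fun e => Classical.choice (h2 e)
    refine ⟨Equiv.ofFiberEquiv f, ?_⟩
    funext k
    exact Equiv.ofFiberEquiv_map f k

lemma orb_eq_of_mem {d : ℕ} {w u : Fin d → E} (h : u ∈ orb w) : orb u = orb w := by
  ext v
  rw [mem_orb_iff_cnt] at *
  rw [mem_orb_iff_cnt]
  simp [h]

lemma mem_orb_self {d : ℕ} (w : Fin d → E) : w ∈ orb w := by
  rw [mem_orb_iff_cnt]; simp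

lemma sum_split {M : Type*} [AddCommMonoid M] {d : ℕ} (l : ℕ) (hl : l ≤ d) (f : Fin d → M) :
    ∑ k, f k = (∑ k : Fin l, f ⟨k, lt_of_lt_of_le k.isLt hl⟩)
      + ∑ k : Fin (d - l), f ⟨l + (k : ℕ), by have := k.isLt; omega⟩ := by
  have key : ∀ (m : ℕ) (h : d = l + m), ∑ k, f k =
      (∑ k : Fin l, f ⟨k, lt_of_lt_of_le k.isLt hl⟩)
      + ∑ k : Fin m, f ⟨l + (k : ℕ), by have := k.isLt; omega⟩ := by
    intro m h
    subst h
    rw [Fin.sum_univ_add]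
    rfl
  exact key (d - l) (by omega)

lemma cnt_split {d : ℕ} (l : ℕ) (hl : l ≤ d) (w : Fin d → E) (e : E) :
    cnt w e = cnt (fstU l hl w) e + cnt (lstU l hl w) e :=
  sum_split l hl _

lemma inv_split (O : E → Prop) (lt : E → E → Prop) {d : ℕ} (l : ℕ) (hl : l ≤ d) (w : Fin d → E) :
    inv O lt w = inv O lt (fstU l hl w) + inv O lt (lstU l hl w)
      + crs O lt (fstU l hl w) (lstU l hl w) := by
  unfold inv crs
  rw [sum_split l hl]
  have h1 : ∀ i : Fin d, (∑ j, if i < j ∧ O (w i) ∧ O (w j) ∧ lt (w j) (w i) then 1 else 0) = _ :=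
    fun i => sum_split l hl _
  simp only [h1]
  rw [Finset.sum_add_distrib, Finset.sum_add_distrib]
  have a1 : ∀ (i j : Fin l), ((⟨i, lt_of_lt_of_le i.isLt hl⟩ : Fin d) <
      ⟨j, lt_of_lt_of_le j.isLt hl⟩) ↔ i < j := fun i j => Iff.rfl
  have a2 : ∀ (i : Fin l) (j : Fin (d - l)), ((⟨i, lt_of_lt_of_le i.isLt hl⟩ : Fin d) <
      ⟨l + j, by have := j.isLt; omega⟩) ↔ True := by
    intro i j
    simp only [Fin.mk_lt_mk, iff_true]; have := i.isLt; omega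
  have a3 : ∀ (i : Fin (d - l)) (j : Fin l), ((⟨l + i, by have := i.isLt; omega⟩ : Fin d) <
      ⟨j, lt_of_lt_of_le j.isLt hl⟩) ↔ False := by
    intro i j
    simp only [Fin.mk_lt_mk, iff_false]; have := j.isLt; omega
  have a4 : ∀ (i j : Fin (d - l)), ((⟨l + i, by have := i.isLt; omega⟩ : Fin d) <
      ⟨l + j, by have := j.isLt; omega⟩) ↔ i < j := by
    intro i j
    simp [Fin.mk_lt_mk]
  simp only [a1, a2, a3, a4, fstU, lstU, true_and, false_and, if_false, Finset.sum_const_zero,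
    zero_add]
  rw [add_right_comm]
  congr!

lemma crs_orb (O : E → Prop) (lt : E → E → Prop) {d e : ℕ} {u u' : Fin d → E} {v v' : Fin e → E}
    (hu : u ∈ orb u') (hv : v ∈ orb v') : crs O lt u v = crs O lt u' v' := by
  obtain ⟨σ, rfl⟩ := mem_orb.1 hu
  obtain ⟨τ, rfl⟩ := mem_orb.1 hv
  unfold crs
  rw [← Equiv.sum_comp σ (fun i => ∑ j, if O (u' i) ∧ O (v' j) ∧ lt (v' j) (u' i) then 1 else 0)]
  refine Finset.sum_congr rfl fun i _ => ?_
  rw [← Equiv.sum_comp τ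
    (fun j => if O (u' (σ i)) ∧ O (v' j) ∧ lt (v' j) (u' (σ i)) then 1 else 0)]
  rfl

lemma app_fst_lst {d : ℕ} (l : ℕ) (hl : l ≤ d) (u : Fin d → E) :
    appF l hl (fstU l hl u) (lstU l hl u) = u := by
  funext k
  unfold appF
  split_ifs with h
  · rfl
  · simp only [lstU]
    congr 1
    ext
    simp only
    omega

lemma fst_app {d : ℕ} (l : ℕ) (hl : l ≤ d) (u : Fin l → E) (v : Fin (d - l) → E) :
    fstU l hl (appF l hl u v) = u := by
  funext k
  simp [fstU, appF]

lemma lst_app {d : ℕ} (l : ℕ) (hl : l ≤ d) (u : Fin l → E) (v : Fin (d - l) → E) :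
    lstU l hl (appF l hl u v) = v := by
  funext k
  simp [lstU, appF]

lemma inv_mono (lo : LinearOrder E) (O : E → Prop) {d : ℕ} {w : Fin d → E}
    (hw : Monotone w) : inv O lo.lt w = 0 := by
  unfold inv
  refine Finset.sum_eq_zero fun i _ => Finset.sum_eq_zero fun j _ => ?_
  rw [if_neg]
  rintro ⟨h, -, -, h2⟩
  exact absurd (hw h.le) (not_le.2 h2)

lemma mono_unique (lo : LinearOrder E) {d : ℕ} {w w' u : Fin d → E}
    (hw : Monotone w) (hw' : Monotone w') (h : u ∈ orb w) (h' : u ∈ orb w') : w = w' := by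
  have h1 : w ∈ orb u := by rw [orb_eq_of_mem h]; exact mem_orb_self w
  have h2 : w' ∈ orb u := by rw [orb_eq_of_mem h']; exact mem_orb_self w'
  obtain ⟨σ, rfl⟩ := mem_orb.1 h1
  obtain ⟨τ, rfl⟩ := mem_orb.1 h2
  exact Tuple.unique_monotone hw hw'

/-- The sorted rearrangement. -/
def srt (lo : LinearOrder E) {d : ℕ} (w : Fin d → E) : Fin d → E := w ∘ Tuple.sort w

lemma srt_mono (lo : LinearOrder E) {d : ℕ} (w : Fin d → E) : Monotone (srt lo w) :=
  Tuple.monotone_sort w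

lemma srt_mem (lo : LinearOrder E) {d : ℕ} (w : Fin d → E) : srt lo w ∈ orb w :=
  mem_orb.2 ⟨_, rfl⟩

lemma mem_orb_srt (lo : LinearOrder E) {d : ℕ} (w : Fin d → E) : w ∈ orb (srt lo w) := by
  rw [orb_eq_of_mem (srt_mem lo w)]; exact mem_orb_self w

lemma abs_split (lo : LinearOrder E) (O : E → Prop) {d : ℕ} (l : ℕ) (hl : l ≤ d)
    (w : Fin d → E) (S : Finset ((Fin l → E) × (Fin (d - l) → E)))
    (hS : ∀ p, p ∈ S ↔ appF l hl p.1 p.2 ∈ orb w ∧ Monotone p.1 ∧ Monotone p.2)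
    {M : Type*} [AddCommGroup M] (F : (Fin l → E) → (Fin (d - l) → E) → M) :
    ∑ u ∈ orb w, ((-1 : ℤ) ^ inv O lo.lt u) • F (fstU l hl u) (lstU l hl u)
      = ∑ p ∈ S, ((-1 : ℤ) ^ inv O lo.lt (appF l hl p.1 p.2)) •
          ∑ u1 ∈ orb p.1, ∑ u2 ∈ orb p.2,
            ((-1 : ℤ) ^ (inv O lo.lt u1 + inv O lo.lt u2)) • F u1 u2 := by
  have happ : ∀ (u1 v1 : Fin l → E) (u2 v2 : Fin (d - l) → E), u1 ∈ orb v1 → u2 ∈ orb v2 →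
      appF l hl u1 u2 ∈ orb (appF l hl v1 v2) := by
    intro u1 v1 u2 v2 h1 h2
    rw [mem_orb_iff_cnt] at *
    intro e
    rw [cnt_split l hl, cnt_split l hl (appF l hl v1 v2)]
    simp only [fst_app, lst_app, h1, h2]
  rw [← Finset.sum_fiberwise_of_maps_to (t := S)
    (g := fun u => (srt lo (fstU l hl u), srt lo (lstU l hl u)))]
  · refine Finset.sum_congr rfl fun p hp => ?_
    obtain ⟨hp1, hp2, hp3⟩ := (hS p).1 hp
    rw [← Finset.sum_product', Finset.smul_sum]
    refine Finset.sum_bij' (fun u _ => (fstU l hl u, lstU l hl u))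
      (fun q _ => appF l hl q.1 q.2) ?_ ?_ ?_ ?_ ?_
    · intro u hu
      rw [Finset.mem_filter] at hu
      obtain ⟨hu, hup⟩ := hu
      have e1 : srt lo (fstU l hl u) = p.1 := congrArg Prod.fst hup
      have e2 : srt lo (lstU l hl u) = p.2 := congrArg Prod.snd hup
      rw [Finset.mem_product, ← e1, ← e2]
      exact ⟨mem_orb_srt lo (fstU l hl u), mem_orb_srt lo (lstU l hl u)⟩
    · intro q hq
      obtain ⟨q1, q2⟩ := Finset.mem_product.1 hq
      rw [Finset.mem_filter]
      refine ⟨?_, ?_⟩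
      · rw [← orb_eq_of_mem hp1]
        exact happ _ _ _ _ q1 q2
      · rw [fst_app, lst_app]
        exact Prod.ext (mono_unique lo (srt_mono lo _) hp2 (mem_orb_srt lo _) q1)
          (mono_unique lo (srt_mono lo _) hp3 (mem_orb_srt lo _) q2)
    · intro u _
      exact app_fst_lst l hl u
    · intro q _
      exact Prod.ext (fst_app l hl _ _) (lst_app l hl _ _)
    · intro u hu
      rw [Finset.mem_filter] at hu
      obtain ⟨hu, hup⟩ := hu
      have e1 : srt lo (fstU l hl u) = p.1 := congrArg Prod.fst hup
      have e2 : srt lo (lstU l hl u) = p.2 := congrArg Prod.snd hup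
      have m1 := srt_mem lo (fstU l hl u)
      have m2 := srt_mem lo (lstU l hl u)
      rw [e1] at m1
      rw [e2] at m2
      rw [smul_smul, ← pow_add]
      congr 2
      rw [inv_split O lo.lt l hl u, inv_split O lo.lt l hl (appF _ _ _ _), fst_app, lst_app,
        inv_mono lo O hp2, inv_mono lo O hp3, crs_orb O lo.lt m1 m2]
      ring
  · intro u hu
    rw [hS]
    refine ⟨?_, srt_mono lo (fstU l hl u), srt_mono lo (lstU l hl u)⟩
    rw [← orb_eq_of_mem hu]
    have := happ _ _ _ _ (srt_mem lo (fstU l hl u)) (srt_mem lo (lstU l hl u))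
    rwa [app_fst_lst] at this

/-- A word is sorted iff it is lexicographically minimal among its rearrangements. -/
lemma mono_iff_lex (lo : LinearOrder E) {d : ℕ} (w : Fin d → E) :
    Monotone w ↔ ∀ σ : Equiv.Perm (Fin d), (∀ k, w k = w (σ k)) ∨
      ∃ i, (∀ k, k < i → w k = w (σ k)) ∧ w i < w (σ i) := by
  constructor
  · intro hw σ
    by_cases h : ∀ k, w k = w (σ k)
    · exact Or.inl h
    right
    push Not at h
    have hne : (univ.filter fun k => w k ≠ w (σ k)).Nonempty := by
      obtain ⟨k, hk⟩ := h
      exact ⟨k, by simpa using hk⟩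
    obtain ⟨i, hi, hmin⟩ := Finset.exists_min_image _ id hne
    have hi' : w i ≠ w (σ i) := by simpa using hi
    have hag : ∀ k, k < i → w k = w (σ k) := by
      intro k hk
      by_contra hc
      have := hmin k (by simpa using hc)
      exact absurd hk (not_lt.2 this)
    refine ⟨i, hag, ?_⟩
    by_contra hc
    have hlt : w (σ i) < w i := lt_of_le_of_ne (not_lt.1 hc) hi'.symm
    have hcard : (univ.filter fun k => w (σ k) ≤ w (σ i)).card
        = (univ.filter fun k => w k ≤ w (σ i)).card := by
      refine Finset.card_bij (fun k _ => σ k) ?_ ?_ ?_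
      · intro k hk; simpa using hk
      · intro a _ b _ hab; exact σ.injective hab
      · intro k hk
        exact ⟨σ⁻¹ k, by simpa using hk, by simp⟩
    have hss : (univ.filter fun k => w k ≤ w (σ i)) ⊂ (univ.filter fun k => w (σ k) ≤ w (σ i)) := by
      rw [Finset.ssubset_iff_of_subset]
      · exact ⟨i, by simp, by simpa using hlt⟩
      · intro k hk
        simp only [Finset.mem_filter, Finset.mem_univ, true_and] at hk ⊢
        have hki : k < i := by
          by_contra hki
          exact absurd (hw (not_lt.1 hki)) (not_le.2 (lt_of_le_of_lt hk hlt))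
        rw [← hag k hki]
        exact hk
    exact absurd hcard (Finset.card_lt_card hss).ne'
  · intro h i j hij
    by_contra hc
    have hc := not_le.1 hc
    have hij' : i < j := lt_of_le_of_ne hij (by rintro rfl; exact lt_irrefl _ hc)
    rcases h (Equiv.swap i j) with h | ⟨k, hk, hk2⟩
    · have := h i
      rw [Equiv.swap_apply_left] at this
      exact absurd hc (by rw [this]; exact lt_irrefl _)
    · rcases lt_trichotomy k i with hki | rfl | hki
      · rw [Equiv.swap_apply_of_ne_of_ne hki.ne (hki.trans hij').ne] at hk2
        exact lt_irrefl _ hk2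
      · rw [Equiv.swap_apply_left] at hk2
        exact lt_asymm hk2 hc
      · have := hk i hki
        rw [Equiv.swap_apply_left] at this
        exact absurd hc (by rw [this]; exact lt_irrefl _)

/-- Product of factorials of multiplicities. -/
def fac (sel : E → Prop) {d : ℕ} (w : Fin d → E) : ℕ :=
  ∏ e ∈ (univ.image w).filter sel, Nat.factorial (cnt w e)

lemma fac_eq (sel : E → Prop) {d : ℕ} (w : Fin d → E) (S : Finset E) (hS : ∀ k, w k ∈ S) :
    fac sel w = ∏ e ∈ S.filter sel, Nat.factorial (cnt w e) := by
  unfold fac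
  refine Finset.prod_subset ?_ ?_
  · refine Finset.filter_subset_filter _ ?_
    intro e he
    obtain ⟨k, -, rfl⟩ := Finset.mem_image.1 he
    exact hS k
  · intro e he hne
    have : cnt w e = 0 := by
      unfold cnt
      refine Finset.sum_eq_zero fun k _ => if_neg ?_
      rintro rfl
      apply hne
      rw [Finset.mem_filter] at he ⊢
      exact ⟨Finset.mem_image_of_mem _ (Finset.mem_univ k), he.2⟩
    rw [this]; rfl

lemma fac_orb (sel : E → Prop) {d : ℕ} {w u : Fin d → E} (h : u ∈ orb w) :
    fac sel u = fac sel w := by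
  rw [fac_eq sel u (univ.image u ∪ univ.image w), fac_eq sel w (univ.image u ∪ univ.image w)]
  · exact Finset.prod_congr rfl fun e _ => by rw [mem_orb_iff_cnt.1 h]
  · intro k; simp
  · intro k; simp

lemma fac_dvd (sel : E → Prop) {d : ℕ} (l : ℕ) (hl : l ≤ d) (w : Fin d → E) :
    fac sel (fstU l hl w) * fac sel (lstU l hl w) ∣ fac sel w := by
  rw [fac_eq sel w (univ.image w), fac_eq sel (fstU l hl w) (univ.image w),
    fac_eq sel (lstU l hl w) (univ.image w), ← Finset.prod_mul_distrib]
  · refine Finset.prod_dvd_prod_of_dvd _ _ fun e _ => ?_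
    rw [cnt_split l hl w]
    exact Nat.factorial_mul_factorial_dvd_factorial_add _ _
  all_goals intro k; simp [fstU, lstU]

end Comb

/-! ### Translation to words in the alphabet `β × [1,n] × [1,n]` -/

/-- A triple of words as a word of triples. -/
def zw {d : ℕ} (w : WordTriple β n d) : Fin d → β × Fin n × Fin n :=
  fun k => (w.1 k, w.2.1 k, w.2.2 k)

/-- A word of triples as a triple of words. -/
def uz {d : ℕ} (u : Fin d → β × Fin n × Fin n) : WordTriple β n d :=
  (fun k => (u k).1, fun k => (u k).2.1, fun k => (u k).2.2)

/-- The realization of a letter in `A × [1,n] × [1,n]`. -/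
def em (P : GoodPair 𝕜 A β) (e : β × Fin n × Fin n) : A × Fin n × Fin n := (P.bas e.1, e.2)

lemma em_inj [Nontrivial 𝕜] (P : GoodPair 𝕜 A β) :
    Function.Injective (em (n := n) P) := by
  rintro ⟨b, rs⟩ ⟨b', rs'⟩ h
  simp only [em, Prod.mk.injEq] at h
  rw [P.bas.injective h.1, h.2]

/-- The induced linear order on letters. -/
def lo [Nontrivial 𝕜] (P : GoodPair 𝕜 A β) (ord : LinearOrder (A × Fin n × Fin n)) :
    LinearOrder (β × Fin n × Fin n) :=
  @LinearOrder.lift' _ _ ord (em P) (em_inj P)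

/-- Oddness of letters. -/
def Odl (P : GoodPair 𝕜 A β) (e : β × Fin n × Fin n) : Prop := P.bas e.1 ∈ P.od

lemma od_iff [Nontrivial 𝕜] (P : GoodPair 𝕜 A β) (i : β) : P.bas i ∈ P.od ↔ P.part i = 2 := by
  constructor
  · intro h
    by_contra hc
    have hev : P.bas i ∈ P.ev := by
      have : P.part i = 0 ∨ P.part i = 1 := by
        generalize P.part i = x at hc
        fin_cases x <;> simp_all
      rcases this with h0 | h1
      · exact P.aa_le_ev (P.bas_mem_aa i h0)
      · rw [← P.aa_sup_cc]
        exact Submodule.mem_sup_right (P.bas_mem_cc i h1)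
    exact P.bas.ne_zero i (Submodule.disjoint_def.1 P.compl.disjoint _ hev h)
  · exact P.bas_mem_od i

lemma ite_any (p q : Prop) (i1 : Decidable p) (i2 : Decidable q) (h : p ↔ q) :
    @ite ℕ p i1 1 0 = @ite ℕ q i2 1 0 := by
  by_cases hp : p
  · rw [if_pos hp, if_pos (h.1 hp)]
  · rw [if_neg hp, if_neg (fun hq => hp (h.2 hq))]

lemma ang_eq [Nontrivial 𝕜] (P : GoodPair 𝕜 A β) (ord : LinearOrder (A × Fin n × Fin n))
    {d : ℕ} (w : WordTriple β n d) :
    ang P.od ord (fun k => P.bas (w.1 k)) w.2.1 w.2.2 = inv (Odl P) (lo P ord).lt (zw w) := by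
  unfold ang inv
  rw [Finset.card_filter, ← Finset.univ_product_univ, Finset.sum_product]
  refine Finset.sum_congr rfl fun i _ => Finset.sum_congr rfl fun j _ => ?_
  exact ite_any _ _ _ _ Iff.rfl

/-- The pure tensor of a word of letters. -/
def Yw {P : GoodPair 𝕜 A β} (D : Tower 𝕜 A β n T P) {d : ℕ} (u : Fin d → β × Fin n × Fin n) :
    T d :=
  D.X (fun k => P.bas (u k).1) (fun k => (u k).2.1) (fun k => (u k).2.2)

lemma xiB_eq [Nontrivial 𝕜] {P : GoodPair 𝕜 A β} (D : Tower 𝕜 A β n T P)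
    (ord : LinearOrder (A × Fin n × Fin n)) {d : ℕ} (w : WordTriple β n d) :
    xiB D ord w.1 w.2.1 w.2.2 = ∑ u ∈ orb (zw w),
      ((-1 : ℤ) ^ (inv (Odl P) (lo P ord).lt (zw w) + inv (Odl P) (lo P ord).lt u)) •
        Yw D u := by
  unfold xiB xiH
  rw [ang_eq]
  let g : (Fin d → β × Fin n × Fin n) → (Fin d → A) × (Fin d → Fin n) × (Fin d → Fin n) :=
    fun u => (fun k => P.bas (u k).1, fun k => (u k).2.1, fun k => (u k).2.2)
  have hg : Function.Injective g := by
    intro u v h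
    simp only [g, Prod.mk.injEq] at h
    funext k
    exact Prod.ext (P.bas.injective (congrFun h.1 k))
      (Prod.ext (congrFun h.2.1 k) (congrFun h.2.2 k))
  have himg : (univ.image fun σ : Equiv.Perm (Fin d) =>
      ((fun k => P.bas (w.1 k)) ∘ σ, w.2.1 ∘ σ, w.2.2 ∘ σ)) = (orb (zw w)).image g := by
    ext v
    rw [Finset.mem_image, Finset.mem_image]
    constructor
    · rintro ⟨σ, -, rfl⟩
      exact ⟨zw w ∘ σ, mem_orb.2 ⟨σ, rfl⟩, rfl⟩
    · rintro ⟨u, hu, rfl⟩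
      obtain ⟨σ, rfl⟩ := mem_orb.1 hu
      exact ⟨σ, Finset.mem_univ _, rfl⟩
  rw [himg, Finset.sum_image (fun u _ v _ h => hg h)]
  refine Finset.sum_congr rfl fun u _ => ?_
  have := ang_eq P ord (uz u)
  have h2 : zw (uz u) = u := rfl
  rw [h2] at this
  rw [← this]
  rfl

lemma facSel_eq (P : GoodPair 𝕜 A β) {d : ℕ} (w : WordTriple β n d) :
    facSel (fun i => P.part i = 1) w.1 w.2.1 w.2.2
      = fac (fun e => P.part e.1 = 1) (zw w) := by
  unfold facSel fac mco cnt
  refine Finset.prod_congr (by ext; simp [zw]) fun e _ => ?_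
  rw [Finset.card_filter]
  exact congrArg _ (Finset.sum_congr rfl fun k _ => ite_any _ _ _ _ Iff.rfl)

lemma tri0_iff [Nontrivial 𝕜] (P : GoodPair 𝕜 A β) (ord : LinearOrder (A × Fin n × Fin n))
    {d : ℕ} (w : WordTriple β n d) :
    IsTri0 P ord w ↔ IsTriB P w.1 w.2.1 w.2.2 ∧
      @Monotone _ _ _ (lo P ord).toPreorder (zw w) := by
  unfold IsTri0
  rw [mono_iff_lex (lo P ord)]
  refine and_congr Iff.rfl (forall_congr' fun σ => ?_)
  have h : ∀ k, entryAt P w k = entryAt P (wAct w σ) k ↔ zw w k = zw w (σ k) := fun k =>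
    (em_inj P).eq_iff (a := zw w k) (b := zw w (σ k))
  unfold wordLE
  simp only [h]
  exact Iff.rfl

lemma triB_sub (P : GoodPair 𝕜 A β) {d e : ℕ} (w : WordTriple β n d) (v : WordTriple β n e)
    (f : Fin e → Fin d) (hf : Function.Injective f) (h : zw v = zw w ∘ f)
    (hw : IsTriB P w.1 w.2.1 w.2.2) : IsTriB P v.1 v.2.1 v.2.2 := by
  intro k l hkl he
  have h1 : zw v k = zw v l := he
  rw [h] at h1
  have h3 : v.1 k = w.1 (f k) := congrArg Prod.fst (congrFun h k)
  rw [h3]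
  exact hw (f k) (f l) (fun hc => hkl (hf hc)) h1

lemma sgnc_eq [Nontrivial 𝕜] (P : GoodPair 𝕜 A β) (ord : LinearOrder (A × Fin n × Fin n))
    {d : ℕ} (w : WordTriple β n d) (hw : IsTri0 P ord w) (σ : Equiv.Perm (Fin d)) :
    sgnc P.od σ (fun k => P.bas (w.1 k)) = inv (Odl P) (lo P ord).lt (zw w ∘ σ) := by
  obtain ⟨hB, hM⟩ := (tri0_iff P ord w).1 hw
  rw [inv_card]
  unfold sgnc
  refine Finset.card_bij' (fun kl _ => (σ⁻¹ kl.2, σ⁻¹ kl.1)) (fun ij _ => (σ ij.2, σ ij.1))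
    ?_ ?_ ?_ ?_
  · rintro ⟨k, l⟩ h
    simp only [Finset.mem_filter, Finset.mem_univ, true_and] at h ⊢
    obtain ⟨h1, h2, h3, h4⟩ := h
    refine ⟨h2, ?_⟩
    have hs : ∀ k, σ (σ⁻¹ k) = k := fun k => σ.apply_symm_apply k
    simp only [Function.comp, hs]
    refine ⟨h4, h3, ?_⟩
    refine @lt_of_le_of_ne _ (lo P ord).toPartialOrder _ _ (hM h1.le) ?_
    intro hc
    exact hB k l h1.ne hc ((od_iff P _).1 h3)
  · rintro ⟨i, j⟩ h
    simp only [Finset.mem_filter, Finset.mem_univ, true_and] at h ⊢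
    obtain ⟨h1, h2, h3, h4⟩ := h
    have hs : ∀ k, σ⁻¹ (σ k) = k := fun k => σ.symm_apply_apply k
    simp only [hs]
    refine ⟨?_, h1, h3, h2⟩
    by_contra hc
    exact @not_lt_of_ge _ (lo P ord).toPreorder _ _ (hM (not_lt.1 hc)) h4
  · rintro ⟨k, l⟩ _
    simp
  · rintro ⟨k, l⟩ _
    simp

lemma zw_concat {d : ℕ} (l : ℕ) (hl : l ≤ d) (p : WordTriple β n l × WordTriple β n (d - l)) :
    zw (concatW l hl p) = appF l hl (zw p.1) (zw p.2) := by
  funext k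
  simp only [zw, concatW, appF]
  split_ifs <;> rfl

lemma mem_splits [Nontrivial 𝕜] (P : GoodPair 𝕜 A β) (ord : LinearOrder (A × Fin n × Fin n))
    {d : ℕ} (l : ℕ) (hl : l ≤ d) (w : WordTriple β n d) (hw : IsTri0 P ord w)
    (p : WordTriple β n l × WordTriple β n (d - l)) :
    p ∈ splitsF P ord l hl w ↔ appF l hl (zw p.1) (zw p.2) ∈ orb (zw w) ∧
      @Monotone _ _ _ (lo P ord).toPreorder (zw p.1) ∧
      @Monotone _ _ _ (lo P ord).toPreorder (zw p.2) := by
  obtain ⟨hB, hM⟩ := (tri0_iff P ord w).1 hw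
  unfold splitsF
  rw [Finset.mem_filter, tri0_iff, tri0_iff]
  constructor
  · rintro ⟨h1, h2, h3⟩
    refine ⟨?_, h2.2, h3.2⟩
    obtain ⟨σ, -, rfl⟩ := Finset.mem_image.1 h1
    rw [mem_orb]
    exact ⟨σ, (app_fst_lst l hl (zw w ∘ σ)).symm⟩
  · rintro ⟨h1, h2, h3⟩
    obtain ⟨σ, hσ⟩ := mem_orb.1 h1
    have e1 : zw p.1 = fstU l hl (zw w ∘ σ) := by rw [hσ, fst_app]
    have e2 : zw p.2 = lstU l hl (zw w ∘ σ) := by rw [hσ, lst_app]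
    refine ⟨?_, ⟨?_, h2⟩, ⟨?_, h3⟩⟩
    · refine Finset.mem_image.2 ⟨σ, Finset.mem_univ _, ?_⟩
      refine Prod.ext ?_ ?_
      · exact (congrArg uz e1).symm
      · exact (congrArg uz e2).symm
    · refine triB_sub P w p.1 (fun k => σ ⟨k, lt_of_lt_of_le k.isLt hl⟩) ?_ e1 hB
      intro a b hab
      have := σ.injective hab
      exact Fin.ext (by simpa using this)
    · refine triB_sub P w p.2 (fun k => σ ⟨l + k, by have := k.isLt; omega⟩) ?_ e2 hB
      intro a b hab
      have := σ.injective hab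
      exact Fin.ext (by simpa using this)

lemma nab_tcast {P : GoodPair 𝕜 A β} (D : Tower 𝕜 A β n T P) {d : ℕ} (l m : ℕ) (h : d = l + m)
    (a : Fin d → A) (r s : Fin d → Fin n) :
    D.nab l m (tcast (𝕜 := 𝕜) h (D.X a r s)) =
      D.X (fun k : Fin l => a ⟨k, by have := k.isLt; omega⟩)
          (fun k => r ⟨k, by have := k.isLt; omega⟩) (fun k => s ⟨k, by have := k.isLt; omega⟩)
        ⊗ₜ[𝕜] D.X (fun k : Fin m => a ⟨l + k, by have := k.isLt; omega⟩)
          (fun k => r ⟨l + k, by have := k.isLt; omega⟩)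
          (fun k => s ⟨l + k, by have := k.isLt; omega⟩) := by
  subst h
  exact D.nab_X l m a r s

lemma nab_Yw {P : GoodPair 𝕜 A β} (D : Tower 𝕜 A β n T P) {d : ℕ} (l : ℕ) (hl : l ≤ d)
    (h : d = l + (d - l)) (u : Fin d → β × Fin n × Fin n) :
    D.nab l (d - l) (tcast (𝕜 := 𝕜) h (Yw D u)) = Yw D (fstU l hl u) ⊗ₜ[𝕜] Yw D (lstU l hl u) :=
  nab_tcast D l (d - l) h _ _ _

lemma nab_xi [Nontrivial 𝕜] (P : GoodPair 𝕜 A β) (D : Tower 𝕜 A β n T P)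
    (ord : LinearOrder (A × Fin n × Fin n)) (d l : ℕ) (hl : l ≤ d) (h : d = l + (d - l))
    (w : WordTriple β n d) (hw : IsTri0 P ord w) :
    D.nab l (d - l) (tcast (𝕜 := 𝕜) h (xiB D ord w.1 w.2.1 w.2.2)) =
      ∑ p ∈ splitsF P ord l hl w,
        ((-1 : ℤ) ^ inv (Odl P) (lo P ord).lt (appF l hl (zw p.1) (zw p.2))) •
          (xiB D ord p.1.1 p.1.2.1 p.1.2.2 ⊗ₜ[𝕜] xiB D ord p.2.1 p.2.2.1 p.2.2.2) := by
  let f : WordTriple β n l × WordTriple β n (d - l) →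
      (Fin l → β × Fin n × Fin n) × (Fin (d - l) → β × Fin n × Fin n) :=
    fun p => (zw p.1, zw p.2)
  have hf : Function.Injective f := by
    intro p q hpq
    exact congrArg (fun x => (uz x.1, uz x.2)) hpq
  have key := abs_split (lo P ord) (Odl P) l hl (zw w) ((splitsF P ord l hl w).image f) (by
    intro p
    have hp : f (uz p.1, uz p.2) = p := rfl
    have := mem_splits P ord l hl w hw (uz p.1, uz p.2)
    refine Iff.trans ?_ this
    constructor
    · intro hm
      obtain ⟨q, hq, rfl⟩ := Finset.mem_image.1 hm
      exact hq
    · intro hm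
      exact Finset.mem_image.2 ⟨_, hm, hp⟩)
    (fun u v => Yw D u ⊗ₜ[𝕜] Yw D v)
  rw [Finset.sum_image (fun u _ v _ h => hf h)] at key
  rw [xiB_eq, inv_mono (lo P ord) (Odl P) ((tri0_iff P ord w).1 hw).2]
  simp only [map_sum, map_zsmul, nab_Yw D l hl, zero_add]
  rw [key]
  refine Finset.sum_congr rfl fun p hp => ?_
  obtain ⟨-, hp1, hp2⟩ := (mem_splits P ord l hl w hw p).1 hp
  congr 1
  rw [xiB_eq, xiB_eq, inv_mono (lo P ord) (Odl P) hp1, inv_mono (lo P ord) (Odl P) hp2]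
  rw [TensorProduct.sum_tmul]
  refine Finset.sum_congr rfl fun u _ => ?_
  rw [TensorProduct.tmul_sum]
  refine Finset.sum_congr rfl fun v _ => ?_
  rw [zero_add, zero_add, pow_add, mul_smul]
  rcases neg_one_pow_eq_or ℤ (inv (Odl P) (lo P ord).lt u) with h1 | h1 <;>
  rcases neg_one_pow_eq_or ℤ (inv (Odl P) (lo P ord).lt v) with h2 | h2 <;>
  simp [h1, h2, TensorProduct.neg_tmul, TensorProduct.tmul_neg]

lemma dvd_main [Nontrivial 𝕜] (P : GoodPair 𝕜 A β) (ord : LinearOrder (A × Fin n × Fin n))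
    (d l : ℕ) (hl : l ≤ d) (w : WordTriple β n d) (hw : IsTri0 P ord w)
    (p : WordTriple β n l × WordTriple β n (d - l)) (hp : p ∈ splitsF P ord l hl w) :
    facSel (fun i => P.part i = 1) p.1.1 p.1.2.1 p.1.2.2
          * facSel (fun i => P.part i = 1) p.2.1 p.2.2.1 p.2.2.2
        ∣ facSel (fun i => P.part i = 1) w.1 w.2.1 w.2.2 := by
  rw [facSel_eq, facSel_eq, facSel_eq]
  obtain ⟨hp, -, -⟩ := (mem_splits P ord l hl w hw p).1 hp
  rw [← fac_orb _ hp]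
  have := fac_dvd (fun e : β × Fin n × Fin n => P.part e.1 = 1) l hl (appF l hl (zw p.1) (zw p.2))
  rwa [fst_app, lst_app] at this

lemma nab_eta [Nontrivial 𝕜] (P : GoodPair 𝕜 A β) (D : Tower 𝕜 A β n T P)
    (ord : LinearOrder (A × Fin n × Fin n)) (d l : ℕ) (hl : l ≤ d) (h : d = l + (d - l))
    (w : WordTriple β n d) (hw : IsTri0 P ord w) :
    D.nab l (d - l) (tcast (𝕜 := 𝕜) h (eta D ord w.1 w.2.1 w.2.2)) =
      ∑ p ∈ splitsF P ord l hl w,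
        ((-1 : ℤ) ^ inv (Odl P) (lo P ord).lt (appF l hl (zw p.1) (zw p.2))) •
          ((facSel (fun i => P.part i = 1) w.1 w.2.1 w.2.2 /
              (facSel (fun i => P.part i = 1) p.1.1 p.1.2.1 p.1.2.2
                * facSel (fun i => P.part i = 1) p.2.1 p.2.2.1 p.2.2.2)) •
            (eta D ord p.1.1 p.1.2.1 p.1.2.2 ⊗ₜ[𝕜] eta D ord p.2.1 p.2.2.1 p.2.2.2)) := by
  unfold eta
  rw [map_nsmul, map_nsmul, nab_xi P D ord d l hl h w hw, Finset.smul_sum]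
  refine Finset.sum_congr rfl fun p hp => ?_
  rw [smul_comm]
  congr 1
  have hd := dvd_main P ord d l hl w hw p hp
  rw [← TensorProduct.smul_tmul', TensorProduct.tmul_smul, smul_smul, smul_smul, mul_assoc,
    Nat.div_mul_cancel hd]

lemma eta_srt [Nontrivial 𝕜] (P : GoodPair 𝕜 A β) (D : Tower 𝕜 A β n T P)
    (ord : LinearOrder (A × Fin n × Fin n)) {d : ℕ} (w v : WordTriple β n d)
    (h : zw v ∈ orb (zw w)) : ∃ z : ℤ, eta D ord w.1 w.2.1 w.2.2 = z • eta D ord v.1 v.2.1 v.2.2 := by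
  refine ⟨(-1) ^ (inv (Odl P) (lo P ord).lt (zw w) + inv (Odl P) (lo P ord).lt (zw v)), ?_⟩
  unfold eta
  rw [facSel_eq, facSel_eq, fac_orb _ h, smul_comm]
  congr 1
  rw [xiB_eq, xiB_eq, orb_eq_of_mem h, Finset.smul_sum]
  refine Finset.sum_congr rfl fun u _ => ?_
  rw [smul_smul, ← pow_add]
  congr 1
  rw [show ∀ a b c : ℕ, a + b + (b + c) = (a + c) + 2 * b by intros; ring,
    pow_add _ (_ + _) (2 * _), pow_mul]
  simp

/-- For `T = (𝐛,𝐫,𝐬) ∈ Tri^B_0(n,d)`, every split `(T¹,T²) ∈ Spl_l(T)`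
satisfies `[T¹]^!_𝔠·[T²]^!_𝔠 ∣ [T]^!_𝔠`, and the `(l, d-l)`-th component of the coproduct
satisfies
`∇(η_T) = Σ_{(T¹,T²) ∈ Spl_l(T)} (−1)^{⟨σ^T_{T¹,T²};𝐛⟩} ([T]^!_𝔠/([T¹]^!_𝔠[T²]^!_𝔠)) η_{T¹} ⊗ η_{T²}`.
In particular each component of `∇` maps `T^A_𝔞(n,d)` into `T^A_𝔞(n,l) ⊗ T^A_𝔞(n,d−l)`,
so `T^A_𝔞(n) = ⊕_d T^A_𝔞(n,d)` is a sub-supercoalgebra of `⊕_d M_n(A)^{⊗d}`. -/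
theorem statement5 {𝕜 A β : Type} [CommRing 𝕜] [IsDomain 𝕜] [CharZero 𝕜]
    [NonUnitalRing A] [Module 𝕜 A] [SMulCommClass 𝕜 A A] [IsScalarTower 𝕜 A A]
    {n : ℕ} (hn : 0 < n) {T : ℕ → Type} [∀ e, NonUnitalRing (T e)] [∀ e, Module 𝕜 (T e)]
    (P : GoodPair 𝕜 A β) (D : Tower 𝕜 A β n T P) (ord : LinearOrder (A × Fin n × Fin n))
    (d l : ℕ) (hl : l ≤ d)
    (w : WordTriple β n d) (hw : IsTri0 P ord w)
    (sig : WordTriple β n l × WordTriple β n (d - l) → Equiv.Perm (Fin d))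
    (hsig : ∀ p ∈ splitsF P ord l hl w,
      wAct w (sig p) = concatW l hl p ∧
        ∀ σ : Equiv.Perm (Fin d), wAct w σ = concatW l hl p → invCount (sig p) ≤ invCount σ) :
    (∀ p ∈ splitsF P ord l hl w,
      facSel (fun i => P.part i = 1) p.1.1 p.1.2.1 p.1.2.2
          * facSel (fun i => P.part i = 1) p.2.1 p.2.2.1 p.2.2.2
        ∣ facSel (fun i => P.part i = 1) w.1 w.2.1 w.2.2) ∧
    (D.nab l (d - l)
        (tcast (𝕜 := 𝕜) (show d = l + (d - l) by omega) (eta D ord w.1 w.2.1 w.2.2)) =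
      ∑ p ∈ splitsF P ord l hl w,
        ((-1 : ℤ) ^ sgnc P.od (sig p) (fun k => P.bas (w.1 k))) •
          ((facSel (fun i => P.part i = 1) w.1 w.2.1 w.2.2 /
              (facSel (fun i => P.part i = 1) p.1.1 p.1.2.1 p.1.2.2
                * facSel (fun i => P.part i = 1) p.2.1 p.2.2.1 p.2.2.2)) •
            (eta D ord p.1.1 p.1.2.1 p.1.2.2 ⊗ₜ[𝕜] eta D ord p.2.1 p.2.2.1 p.2.2.2))) ∧
    (∀ x ∈ SchurT D ord d, D.nab l (d - l) (tcast (𝕜 := 𝕜) (show d = l + (d - l) by omega) x) ∈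
      LinearMap.range (TensorProduct.map (SchurT D ord l).subtype
        (SchurT D ord (d - l)).subtype)) := by
  refine ⟨fun p hp => dvd_main P ord d l hl w hw p hp, ?_, ?_⟩
  · rw [nab_eta P D ord d l hl _ w hw]
    refine Finset.sum_congr rfl fun p hp => ?_
    have h1 : zw w ∘ (sig p) = appF l hl (zw p.1) (zw p.2) := by
      rw [← zw_concat, ← (hsig p hp).1]
      rfl
    rw [sgnc_eq P ord w hw, h1]
  · intro x hx
    unfold SchurT at hx
    induction hx using Submodule.span_induction with
    | zero => simp
    | add x y _ _ hx hy => rw [map_add, map_add]; exact Submodule.add_mem _ hx hy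
    | smul c x _ hx => rw [map_smul, map_smul]; exact Submodule.smul_mem _ c hx
    | mem x hx =>
      obtain ⟨b, r, s, hB, rfl⟩ := hx
      have hm := srt_mem (lo P ord) (zw (b, r, s))
      obtain ⟨z, hz⟩ := eta_srt P D ord (b, r, s) (uz (srt (lo P ord) (zw (b, r, s)))) hm
      have h0 : IsTri0 P ord (uz (srt (lo P ord) (zw (b, r, s)))) := by
        rw [tri0_iff]
        refine ⟨?_, srt_mono (lo P ord) _⟩
        obtain ⟨σ, hσ⟩ := mem_orb.1 hm
        exact triB_sub P (b, r, s) _ σ σ.injective hσ.symm hB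
      rw [show eta D ord b r s = _ from hz, map_zsmul, map_zsmul,
        nab_eta P D ord d l hl _ _ h0]
      refine zsmul_mem (sum_mem fun p hp => zsmul_mem (nsmul_mem ?_ _) _) _
      unfold splitsF at hp
      rw [Finset.mem_filter] at hp
      refine ⟨(⟨eta D ord p.1.1 p.1.2.1 p.1.2.2,
        Submodule.subset_span ⟨_, _, _, hp.2.1.1, rfl⟩⟩ : SchurT D ord l) ⊗ₜ[𝕜]
        (⟨eta D ord p.2.1 p.2.2.1 p.2.2.2,
        Submodule.subset_span ⟨_, _, _, hp.2.2.1, rfl⟩⟩ : SchurT D ord (d - l)), ?_⟩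
      rw [TensorProduct.map_tmul]
      rfl
end GS
end
end

section
/- Let (𝐛,𝐫,𝐬) ∈ Tri^B(n,d) and (𝐜,𝐭,𝐮) ∈ Tri^B(n,e). Then: (i) ξ^{b_1}_{r_1,s_1} * ⋯ * ξ^{b_d}_{r_d,s_d} = [𝐛,𝐫,𝐬]^! · ξ^𝐛_{𝐫,𝐬}; (ii) the integer [𝐛,𝐫,𝐬]^!·[𝐜,𝐭,𝐮]^! divides [𝐛𝐜,𝐫𝐭,𝐬𝐮]^! and ξ^𝐛_{𝐫,𝐬} * ξ^𝐜_{𝐭,𝐮} = ([𝐛𝐜,𝐫𝐭,𝐬𝐮]^! / ([𝐛,𝐫,𝐬]^!·[𝐜,𝐭,𝐮]^!)) · ξ^{𝐛𝐜}_{𝐫𝐭,𝐬𝐮}; (iii) the integer [𝐛,𝐫,𝐬]^!_𝔞·[𝐜,𝐭,𝐮]^!_𝔞 divides [𝐛𝐜,𝐫𝐭,𝐬𝐮]^!_𝔞 and η^𝐛_{𝐫,𝐬} * η^𝐜_{𝐭,𝐮} = ([𝐛𝐜,𝐫𝐭,𝐬𝐮]^!_𝔞 / ([𝐛,𝐫,𝐬]^!_𝔞·[𝐜,𝐭,𝐮]^!_𝔞))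 · η^{𝐛𝐜}_{𝐫𝐭,𝐬𝐮}; where in (ii) and (iii) the right-hand side is interpreted as zero when the concatenation (𝐛𝐜,𝐫𝐭,𝐬𝐮) does not lie in Tri^B(n,d+e). -/
open Finset

open scoped Classical TensorProduct

noncomputable section

namespace GS

variable {𝕜 A β : Type} [CommRing 𝕜] [NonUnitalRing A] [Module 𝕜 A]

variable {n : ℕ} {T : ℕ → Type} [∀ e, NonUnitalRing (T e)] [∀ e, Module 𝕜 (T e)]

/-! ### Auxiliary lemmas -/

section aux

/-- The block permutation `σ ⊕ τ`. -/
def blk {d e : ℕ} (σ : Equiv.Perm (Fin d)) (τ : Equiv.Perm (Fin e)) :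
    Equiv.Perm (Fin (d + e)) :=
  finSumFinEquiv.permCongr (Equiv.sumCongr σ τ)

theorem blk_castAdd {d e : ℕ} (σ : Equiv.Perm (Fin d)) (τ : Equiv.Perm (Fin e)) (k : Fin d) :
    blk σ τ (Fin.castAdd e k) = Fin.castAdd e (σ k) := by
  simp [blk, Equiv.permCongr_apply]

theorem blk_natAdd {d e : ℕ} (σ : Equiv.Perm (Fin d)) (τ : Equiv.Perm (Fin e)) (k : Fin e) :
    blk σ τ (Fin.natAdd d k) = Fin.natAdd d (τ k) := by
  simp [blk, Equiv.permCongr_apply]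

theorem blk_mul {d e : ℕ} (σ σ' : Equiv.Perm (Fin d)) (τ τ' : Equiv.Perm (Fin e)) :
    blk σ τ * blk σ' τ' = blk (σ * σ') (τ * τ') := by
  ext k
  refine Fin.addCases (fun k => ?_) (fun k => ?_) k <;>
    simp [blk_castAdd, blk_natAdd]

theorem blk_one {d e : ℕ} : blk (1 : Equiv.Perm (Fin d)) (1 : Equiv.Perm (Fin e)) = 1 := by
  ext k
  refine Fin.addCases (fun k => ?_) (fun k => ?_) k <;>
    simp [blk_castAdd, blk_natAdd]

theorem blk_inv {d e : ℕ} (σ : Equiv.Perm (Fin d)) (τ : Equiv.Perm (Fin e)) :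
    (blk σ τ)⁻¹ = blk σ⁻¹ τ⁻¹ := by
  rw [inv_eq_iff_mul_eq_one, blk_mul]
  simp [blk_one]

theorem append_comp_blk {α : Type} {d e : ℕ} (σ : Equiv.Perm (Fin d)) (τ : Equiv.Perm (Fin e))
    (a : Fin d → α) (c : Fin e → α) :
    Fin.append a c ∘ blk σ τ = Fin.append (a ∘ σ) (c ∘ τ) := by
  ext k
  refine Fin.addCases (fun k => ?_) (fun k => ?_) k <;>
    simp [blk_castAdd, blk_natAdd]

theorem isShuffle_iff {d e : ℕ} (τ : Equiv.Perm (Fin (d + e))) :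
    IsShuffle d e τ ↔ StrictMono (fun k : Fin d => τ⁻¹ (Fin.castAdd e k)) ∧
      StrictMono (fun k : Fin e => τ⁻¹ (Fin.natAdd d k)) := by
  constructor
  · rintro ⟨h1, h2⟩
    refine ⟨fun k l hkl => h1 _ _ ?_ ?_, fun k l hkl => h2 _ _ ?_ ?_⟩
    · exact hkl
    · simp
    · simpa using hkl
    · simp
  · rintro ⟨h1, h2⟩
    constructor
    · intro k l hkl hl
      have hk : (k : ℕ) < d := lt_trans hkl hl
      have := @h1 ⟨k, hk⟩ ⟨l, hl⟩ hkl
      simpa using this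
    · intro k l hkl hk
      have hl : d ≤ (l : ℕ) := le_trans hk (le_of_lt hkl)
      have hk' := k.isLt
      have hl' := l.isLt
      have hkl' : (k : ℕ) < l := hkl
      have := @h2 ⟨k - d, by omega⟩ ⟨l - d, by omega⟩ (by simp [Fin.lt_def]; omega)
      have ek : Fin.natAdd d (⟨k - d, by omega⟩ : Fin e) = k := by ext; simp; omega
      have el : Fin.natAdd d (⟨l - d, by omega⟩ : Fin e) = l := by ext; simp; omega
      simpa only [ek, el] using this

theorem shuffle_unique {d e : ℕ} {τ τ' : Equiv.Perm (Fin (d + e))} (h : IsShuffle d e τ)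
    (h' : IsShuffle d e τ') {σ : Equiv.Perm (Fin d)} {ρ : Equiv.Perm (Fin e)}
    (H : blk σ ρ * τ = τ') : σ = 1 ∧ ρ = 1 := by
  have H2 : τ⁻¹ = τ'⁻¹ * blk σ ρ := by rw [← H]; group
  rw [isShuffle_iff] at h h'
  constructor
  · have hm : StrictMono σ := by
      intro k l hkl
      have h1 := h.1 hkl
      simp only [H2, Equiv.Perm.mul_apply, blk_castAdd] at h1
      exact h'.1.lt_iff_lt.1 h1
    ext k
    rw [StrictMono.eq_id hm]; rfl
  · have hm : StrictMono ρ := by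
      intro k l hkl
      have h1 := h.2 hkl
      simp only [H2, Equiv.Perm.mul_apply, blk_natAdd] at h1
      exact h'.2.lt_iff_lt.1 h1
    ext k
    rw [StrictMono.eq_id hm]; rfl

theorem exists_sort {d m : ℕ} (f : Fin d → Fin m) (hf : Function.Injective f) :
    ∃ σ : Equiv.Perm (Fin d), StrictMono (f ∘ σ) :=
  ⟨Tuple.sort f, (Tuple.monotone_sort f).strictMono_of_injective
    (hf.comp (Tuple.sort f).injective)⟩

/-- Every permutation factors uniquely as a block permutation times a shuffle. -/
theorem sum_shuffle {M : Type} [AddCommMonoid M] (d e : ℕ)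
    (F : Equiv.Perm (Fin (d + e)) → M) :
    ∑ σ : Equiv.Perm (Fin d), ∑ ρ : Equiv.Perm (Fin e),
      ∑ τ ∈ univ.filter (IsShuffle d e), F (blk σ ρ * τ) = ∑ π, F π := by
  simp_rw [← Finset.sum_product']
  refine Finset.sum_bij (fun x _ => blk x.1 x.2.1 * x.2.2) ?_ ?_ ?_ ?_
  · intros; simp
  · rintro ⟨σ, ρ, τ⟩ hx ⟨σ', ρ', τ'⟩ hx' H
    simp only [mem_product, mem_univ, mem_filter, true_and] at hx hx' H
    have H2 : blk (σ'⁻¹ * σ) (ρ'⁻¹ * ρ) * τ = τ' := by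
      rw [← blk_mul, ← blk_inv, mul_assoc, H]; group
    obtain ⟨h1, h2⟩ := shuffle_unique hx hx' H2
    rw [inv_mul_eq_one] at h1 h2
    subst h1 h2
    simp only [mul_right_inj] at H
    simp [H]
  · intro π _
    obtain ⟨σ, hσ⟩ := exists_sort (fun k : Fin d => π⁻¹ (Fin.castAdd e k))
      (fun k l h => by simpa using h)
    obtain ⟨ρ, hρ⟩ := exists_sort (fun k : Fin e => π⁻¹ (Fin.natAdd d k))
      (fun k l h => by simpa using h)
    refine ⟨(σ, ρ, (blk σ ρ)⁻¹ * π), ?_, by simp⟩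
    simp only [mem_product, mem_univ, mem_filter, true_and, isShuffle_iff, mul_inv_rev, inv_inv,
      Equiv.Perm.mul_apply, blk_castAdd, blk_natAdd]
    exact ⟨hσ, hρ⟩
  · intros; rfl

theorem sgnc_blk (od : Submodule 𝕜 A) {d e : ℕ} (σ : Equiv.Perm (Fin d))
    (ρ : Equiv.Perm (Fin e)) (a : Fin d → A) (c : Fin e → A) :
    sgnc od (blk σ ρ) (Fin.append a c) = sgnc od σ a + sgnc od ρ c := by
  have h1 : ∀ (i : Fin d) (j : Fin e), ¬ (Fin.natAdd d j < Fin.castAdd e i) := by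
    intro i j h
    rw [Fin.lt_def] at h
    simp at h
    omega
  simp only [sgnc, Finset.card_filter, Fintype.sum_prod_type, Fin.sum_univ_add, blk_inv,
    blk_castAdd, blk_natAdd, Fin.append_left, Fin.append_right, h1, false_and, and_false,
    if_false, Finset.sum_const_zero, add_zero, zero_add]
  have h2 : ∀ i j : Fin d, Fin.castAdd e i < Fin.castAdd e j ↔ i < j := fun i j => Iff.rfl
  have h3 : ∀ i j : Fin e, Fin.natAdd d i < Fin.natAdd d j ↔ i < j := fun i j => by simp
  simp only [h2, h3]

/-- Symmetrization. -/
def symm' {P : GoodPair 𝕜 A β} (D : Tower 𝕜 A β n T P) {d : ℕ} (x : T d) : T d :=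
  ∑ σ : Equiv.Perm (Fin d), D.act σ x

set_option maxHeartbeats 1000000 in
theorem star_symm {P : GoodPair 𝕜 A β} (D : Tower 𝕜 A β n T P) {d e : ℕ}
    (a : Fin d → A) (r s : Fin d → Fin n) (c : Fin e → A) (t u : Fin e → Fin n)
    (ha : ∀ k, Homog P (a k)) (hc : ∀ k, Homog P (c k)) :
    D.star (symm' D (D.X a r s)) (symm' D (D.X c t u))
      = symm' D (D.X (Fin.append a c) (Fin.append r t) (Fin.append s u)) := by
  have hac : ∀ k, Homog P (Fin.append a c k) := by
    intro k
    refine Fin.addCases (fun k => ?_) (fun k => ?_) k <;> simp [ha, hc]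
  have key : ∀ (σ : Equiv.Perm (Fin d)) (ρ : Equiv.Perm (Fin e)),
      D.star (D.act σ (D.X a r s)) (D.act ρ (D.X c t u))
        = ∑ τ ∈ univ.filter (IsShuffle d e),
          D.act (blk σ ρ * τ) (D.X (Fin.append a c) (Fin.append r t) (Fin.append s u)) := by
    intro σ ρ
    rw [D.act_X σ a r s ha, D.act_X ρ c t u hc, map_zsmul, map_zsmul, LinearMap.smul_apply,
      D.star_X, smul_smul, Finset.smul_sum]
    refine Finset.sum_congr rfl fun τ _ => ?_
    rw [← D.act_act, D.act_X (blk σ ρ) _ _ _ hac, map_zsmul, sgnc_blk, append_comp_blk,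
      append_comp_blk, append_comp_blk, pow_add, mul_comm]
  simp only [symm', map_sum, LinearMap.sum_apply, key]
  rw [Finset.sum_comm]
  exact sum_shuffle d e
    (fun π => D.act π (D.X (Fin.append a c) (Fin.append r t) (Fin.append s u)))

theorem symm_act {P : GoodPair 𝕜 A β} (D : Tower 𝕜 A β n T P) {d : ℕ}
    (σ : Equiv.Perm (Fin d)) (x : T d) : symm' D (D.act σ x) = symm' D x := by
  simp only [symm', D.act_act]
  exact Fintype.sum_equiv (Equiv.mulLeft σ) _ _ (fun τ => rfl)

theorem nsmul_cancel [IsDomain 𝕜] [CharZero 𝕜] {P : GoodPair 𝕜 A β} (D : Tower 𝕜 A β n T P)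
    {d : ℕ} {m : ℕ} (hm : m ≠ 0) {x y : T d} (h : m • x = m • y) : x = y := by
  apply (D.bas d).repr.injective
  ext i
  have h2 := congrArg (fun z => (D.bas d).repr z i) h
  simpa [hm] using h2

theorem bas_od_iff [IsDomain 𝕜] (P : GoodPair 𝕜 A β) (i : β) :
    P.bas i ∈ P.od ↔ P.part i = 2 := by
  constructor
  · intro h
    by_contra hne
    have hev : P.bas i ∈ P.ev := by
      have : P.part i = 0 ∨ P.part i = 1 := by
        generalize P.part i = x at hne; fin_cases x <;> simp_all
      rcases this with h0 | h0
      · exact P.aa_le_ev (P.bas_mem_aa i h0)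
      · rw [← P.aa_sup_cc]
        exact Submodule.mem_sup_right (P.bas_mem_cc i h0)
    exact P.bas.ne_zero i (Submodule.disjoint_def.1 P.compl.disjoint _ hev h)
  · exact P.bas_mem_od i

theorem homog_bas (P : GoodPair 𝕜 A β) (i : β) : Homog P (P.bas i) := by
  have : P.part i = 0 ∨ P.part i = 1 ∨ P.part i = 2 := by
    generalize P.part i = x; fin_cases x <;> simp
  rcases this with h0 | h0 | h0
  · exact Or.inl (P.aa_le_ev (P.bas_mem_aa i h0))
  · left
    rw [← P.aa_sup_cc]
    exact Submodule.mem_sup_right (P.bas_mem_cc i h0)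
  · exact Or.inr (P.bas_mem_od i h0)

/-- Parity of the sign counts. -/
theorem ang_parity (od : Submodule 𝕜 A) (ord : LinearOrder (A × Fin n × Fin n)) {d : ℕ}
    (a : Fin d → A) (r s : Fin d → Fin n) (σ : Equiv.Perm (Fin d))
    (hinj : ∀ k l, k ≠ l → a k ∈ od → (a k, r k, s k) ≠ (a l, r l, s l)) :
    ∃ m, ang od ord a r s + ang od ord (a ∘ σ) (r ∘ σ) (s ∘ σ) = sgnc od σ a + 2 * m := by
  let w : Fin d → A × Fin n × Fin n := fun k => (a k, r k, s k)
  let L : Fin d → Fin d → Prop := fun k l => ord.lt (w k) (w l)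
  have hL : ∀ k l, k ≠ l → a k ∈ od → (L k l ↔ ¬ L l k) := by
    intro k l hkl hk
    have := hinj k l hkl hk
    constructor
    · intro h h'; exact lt_asymm h h'
    · intro h; exact lt_of_le_of_ne (not_lt.1 h) this
  let O : Fin d × Fin d → Prop := fun p => p.1 < p.2 ∧ a p.1 ∈ od ∧ a p.2 ∈ od
  let C : Fin d × Fin d → Prop := fun p => σ⁻¹ p.2 < σ⁻¹ p.1
  let I : Fin d × Fin d → Prop := fun p => L p.2 p.1
  have e1 : ang od ord a r s = (univ.filter fun p => O p ∧ I p ∧ C p).card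
      + (univ.filter fun p => O p ∧ I p ∧ ¬ C p).card := by
    rw [← Finset.card_union_of_disjoint]
    · unfold ang
      congr 1
      ext p
      simp only [mem_filter, mem_union, mem_univ, true_and, O, I, L, w]
      tauto
    · rw [Finset.disjoint_filter]; tauto
  have e2 : sgnc od σ a = (univ.filter fun p => O p ∧ I p ∧ C p).card
      + (univ.filter fun p => O p ∧ ¬ I p ∧ C p).card := by
    rw [← Finset.card_union_of_disjoint]
    · unfold sgnc
      congr 1
      ext p
      simp only [mem_filter, mem_union, mem_univ, true_and, O, C]
      tauto
    · rw [Finset.disjoint_filter]; tauto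
  have e3 : ang od ord (a ∘ σ) (r ∘ σ) (s ∘ σ)
      = (univ.filter fun p => O p ∧ I p ∧ ¬ C p).card
      + (univ.filter fun p => O p ∧ ¬ I p ∧ C p).card := by
    have e4 : ang od ord (a ∘ σ) (r ∘ σ) (s ∘ σ) = (univ.filter fun p : Fin d × Fin d =>
        σ⁻¹ p.1 < σ⁻¹ p.2 ∧ a p.1 ∈ od ∧ a p.2 ∈ od ∧ L p.2 p.1).card := by
      unfold ang
      refine Finset.card_equiv (Equiv.prodCongr σ σ) ?_
      intro p
      simp [L, w]
    have e5 : (univ.filter fun p => O p ∧ ¬ I p ∧ C p).card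
        = (univ.filter fun p : Fin d × Fin d => p.2 < p.1 ∧ σ⁻¹ p.1 < σ⁻¹ p.2 ∧ a p.1 ∈ od ∧
            a p.2 ∈ od ∧ L p.2 p.1).card := by
      refine Finset.card_equiv (Equiv.prodComm _ _) ?_
      rintro ⟨k, l⟩
      simp only [O, I, C, mem_filter, mem_univ, true_and, Equiv.prodComm_apply, Prod.swap]
      by_cases hkl : k < l
      · by_cases hk : a k ∈ od
        · rw [hL k l hkl.ne hk]; tauto
        · tauto
      · tauto
    rw [e4, e5, ← Finset.card_union_of_disjoint]
    · congr 1
      ext ⟨k, l⟩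
      simp only [mem_filter, mem_union, mem_univ, true_and, O, I, C]
      rcases lt_trichotomy k l with h | h | h
      · have h1 := h.not_gt
        have h2 : σ⁻¹ k ≠ σ⁻¹ l := fun h' => h.ne (σ⁻¹.injective h')
        have h3 : σ⁻¹ k < σ⁻¹ l ↔ ¬ σ⁻¹ l < σ⁻¹ k :=
          ⟨fun h => h.not_gt, fun h' => lt_of_le_of_ne (not_lt.1 h') h2⟩
        tauto
      · subst h; simp
      · have h1 := h.not_gt
        tauto
    · rw [Finset.disjoint_filter]
      rintro ⟨k, l⟩ _ h1 h2
      exact lt_asymm h1.1.1 h2.1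
  refine ⟨(univ.filter fun p => O p ∧ I p ∧ ¬ C p).card, ?_⟩
  rw [e1, e2, e3]; ring

theorem card_fiber {α : Type} {d : ℕ} (f : Fin d → α) (σ : Equiv.Perm (Fin d)) :
    (univ.filter fun τ : Equiv.Perm (Fin d) => f ∘ τ = f ∘ σ).card
      = ∏ w ∈ univ.image f, Nat.factorial (univ.filter fun k => f k = w).card := by
  have h := DomMulAct.stabilizer_card' f
  rw [Fintype.card_subtype] at h
  simp only [Fintype.card_subtype] at h
  rw [← h]
  refine Finset.card_equiv (Equiv.mulRight σ⁻¹) ?_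
  intro τ
  simp only [mem_filter, mem_univ, true_and, Equiv.coe_mulRight]
  constructor
  · intro h
    ext k
    have := congrFun h (σ⁻¹ k)
    simpa using this
  · intro h
    ext k
    have := congrFun h (σ k)
    simpa using this

theorem symm_tri [IsDomain 𝕜] {P : GoodPair 𝕜 A β} (D : Tower 𝕜 A β n T P)
    (ord : LinearOrder (A × Fin n × Fin n)) {d : ℕ} (b : Fin d → β) (r s : Fin d → Fin n)
    (h : IsTriB P b r s) :
    symm' D (D.X (fun k => P.bas (b k)) r s)
      = facSel (fun _ => True) b r s • xiB D ord b r s := by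
  set a : Fin d → A := fun k => P.bas (b k) with ha
  have hinj : ∀ k l, k ≠ l → a k ∈ P.od → (a k, r k, s k) ≠ (a l, r l, s l) := by
    intro k l hkl hk he
    simp only [Prod.mk.injEq, ha] at he
    refine h k l hkl ?_ ((bas_od_iff P _).1 hk)
    rw [P.bas.injective he.1, he.2.1, he.2.2]
  let g : Equiv.Perm (Fin d) → (Fin d → A) × (Fin d → Fin n) × (Fin d → Fin n) :=
    fun σ => (a ∘ σ, r ∘ σ, s ∘ σ)
  let F : (Fin d → A) × (Fin d → Fin n) × (Fin d → Fin n) → T d := fun w =>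
    ((-1 : ℤ) ^ (ang P.od ord a r s + ang P.od ord w.1 w.2.1 w.2.2)) • D.X w.1 w.2.1 w.2.2
  have h1 : symm' D (D.X a r s) = ∑ σ : Equiv.Perm (Fin d), F (g σ) := by
    refine Finset.sum_congr rfl fun σ _ => ?_
    rw [D.act_X σ a r s (fun k => homog_bas P _)]
    obtain ⟨m, hm⟩ := ang_parity P.od ord a r s σ hinj
    simp only [F, g]
    rw [hm, pow_add, pow_mul]
    simp
  rw [h1, Finset.sum_comp, xiB, xiH, Finset.smul_sum]
  refine Finset.sum_congr rfl fun w hw => ?_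
  obtain ⟨σ, _, rfl⟩ := Finset.mem_image.1 hw
  simp only [F]
  congr 1
  rw [facSel, Finset.filter_true]
  have h2 := card_fiber (fun k => ((b k, r k, s k) : β × Fin n × Fin n)) σ
  simp only [mco]
  refine Eq.trans ?_ (h2.trans ?_)
  swap
  · exact Finset.prod_congr (by congr!) (fun w _ => by congr!)
  congr 1
  ext τ
  simp only [mem_filter, mem_univ, true_and, g, Prod.mk.injEq, funext_iff, Function.comp, ha,
    P.bas.injective.eq_iff]
  constructor
  · rintro ⟨h1, h2, h3⟩ k
    exact ⟨h1 k, h2 k, h3 k⟩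
  · intro h
    exact ⟨fun k => (h k).1, fun k => (h k).2.1, fun k => (h k).2.2⟩

theorem sgnc_swap (od : Submodule 𝕜 A) {d : ℕ} (a : Fin d → A) (k l : Fin d) (hkl : k < l)
    (hk : a k ∈ od) (hl : a l ∈ od) :
    ∃ m, sgnc od (Equiv.swap k l) a = 2 * m + 1 := by
  let M : Finset (Fin d) := univ.filter fun m => k < m ∧ m < l ∧ a m ∈ od
  refine ⟨M.card, ?_⟩
  have hS : (univ.filter fun kl : Fin d × Fin d =>
      kl.1 < kl.2 ∧ (Equiv.swap k l)⁻¹ kl.2 < (Equiv.swap k l)⁻¹ kl.1 ∧ a kl.1 ∈ od ∧ a kl.2 ∈ od)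
      = insert (k, l) (M.image (fun m => (k, m)) ∪ M.image (fun m => (m, l))) := by
    ext ⟨x, y⟩
    rw [mem_filter]
    simp only [mem_filter, mem_univ, true_and, mem_insert, mem_union, mem_image, M,
      Equiv.swap_inv, Prod.mk.injEq]
    constructor
    · rintro ⟨h1, h2, h3, h4⟩
      rw [Equiv.swap_apply_def, Equiv.swap_apply_def] at h2
      by_cases hx : x = k
      · by_cases hy : y = l
        · exact Or.inl ⟨hx, hy⟩
        · right; left
          refine ⟨y, ⟨by omega, ?_, h4⟩, hx.symm, rfl⟩
          subst hx
          rw [if_neg h1.ne', if_neg hy, if_pos rfl] at h2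
          exact h2
      · right; right
        rw [if_neg hx] at h2
        split_ifs at h2 with c1 c2 c3 c4 c5
        all_goals first
          | omega
          | exact ⟨x, ⟨by omega, by omega, h3⟩, rfl, by omega⟩
    · rintro (⟨rfl, rfl⟩ | ⟨m, ⟨h1, h2, h3⟩, rfl, rfl⟩ | ⟨m, ⟨h1, h2, h3⟩, rfl, rfl⟩)
      · simp [hkl, hk, hl]
      · rw [Equiv.swap_apply_left, Equiv.swap_apply_of_ne_of_ne h1.ne' h2.ne]
        exact ⟨h1, h2, hk, h3⟩
      · rw [Equiv.swap_apply_right, Equiv.swap_apply_of_ne_of_ne h1.ne' h2.ne]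
        exact ⟨h2, h1, h3, hl⟩
  unfold sgnc
  rw [hS, Finset.card_insert_of_notMem, Finset.card_union_of_disjoint,
    Finset.card_image_of_injective, Finset.card_image_of_injective]
  · ring
  · intro x y h; simpa using h
  · intro x y h; simpa using h
  · rw [Finset.disjoint_left]
    intro x hx hy
    simp only [mem_image, M, mem_filter, mem_univ, true_and] at hx hy
    obtain ⟨m, hm, rfl⟩ := hx
    obtain ⟨m', hm', he⟩ := hy
    simp only [Prod.mk.injEq] at he
    have := he.1
    omega
  · simp only [mem_image, M, mem_filter, mem_univ, true_and, mem_union, Prod.mk.injEq]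
    rintro (⟨m, hm, -, rfl⟩ | ⟨m, hm, rfl, -⟩)
    · exact lt_irrefl _ hm.2.1
    · exact lt_irrefl _ hm.1

theorem symm_not_tri [IsDomain 𝕜] [CharZero 𝕜] {P : GoodPair 𝕜 A β} (D : Tower 𝕜 A β n T P)
    {d : ℕ} (b : Fin d → β) (r s : Fin d → Fin n) (h : ¬ IsTriB P b r s) :
    symm' D (D.X (fun k => P.bas (b k)) r s) = 0 := by
  obtain ⟨k, l, hkl, he, hp⟩ : ∃ k l : Fin d, k < l ∧
      ((b k, r k, s k) : β × Fin n × Fin n) = (b l, r l, s l) ∧ P.part (b k) = 2 := by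
    unfold IsTriB at h
    push Not at h
    obtain ⟨k, l, hne, he, hp⟩ := h
    rcases lt_or_gt_of_ne hne with h | h
    · exact ⟨k, l, h, he, hp⟩
    · refine ⟨l, k, h, he.symm, ?_⟩
      rw [← (Prod.mk.inj he).1]; exact hp
  simp only [Prod.mk.injEq] at he
  obtain ⟨hb, hr, hs⟩ := he
  obtain ⟨m, hm⟩ := sgnc_swap P.od (fun k => P.bas (b k)) k l hkl (P.bas_mem_od _ hp)
    (P.bas_mem_od _ (hb ▸ hp))
  have hsw : ∀ {α : Type} (f : Fin d → α), f k = f l → f ∘ Equiv.swap k l = f := by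
    intro α f hf
    ext x
    simp only [Function.comp, Equiv.swap_apply_def]
    split_ifs with h1 h2
    · rw [h1, hf]
    · rw [h2, hf]
    · rfl
  have h1 := symm_act D (Equiv.swap k l) (D.X (fun k => P.bas (b k)) r s)
  rw [D.act_X _ _ _ _ (fun k => homog_bas P _), hm, hsw _ (by simp [hb]), hsw _ hr, hsw _ hs,
    pow_succ, pow_mul] at h1
  have h2 : symm' D (-D.X (fun k => P.bas (b k)) r s)
      = - symm' D (D.X (fun k => P.bas (b k)) r s) := by
    simp [symm']
  simp only [even_two, Even.neg_pow, one_pow, one_mul, neg_smul, one_smul, h2] at h1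
  refine nsmul_cancel D two_ne_zero ?_
  rw [two_nsmul, smul_zero]
  nth_rewrite 1 [← h1]
  simp

theorem starIter_eq {P : GoodPair 𝕜 A β} (D : Tower 𝕜 A β n T P) :
    ∀ (e : ℕ) (a : Fin e → A) (r s : Fin e → Fin n), (∀ k, Homog P (a k)) →
      starIter D e a r s = symm' D (D.X a r s)
  | 0, a, r, s, ha => by
      have h1 : a = Fin.elim0 := Subsingleton.elim _ _
      have h2 : r = Fin.elim0 := Subsingleton.elim _ _
      have h3 : s = Fin.elim0 := Subsingleton.elim _ _
      subst h1 h2 h3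
      simp only [starIter, symm', Finset.univ_unique, Finset.sum_singleton]
      rw [D.act_X _ _ _ _ ha]
      have h4 : sgnc P.od default (Fin.elim0 : Fin 0 → A) = 0 := by simp [sgnc]
      rw [h4, pow_zero, one_smul]
      congr 1
  | e + 1, a, r, s, ha => by
      have hX : D.X (fun _ : Fin 1 => a (Fin.last e)) (fun _ => r (Fin.last e))
          (fun _ => s (Fin.last e)) = symm' D (D.X (fun _ : Fin 1 => a (Fin.last e))
          (fun _ => r (Fin.last e)) (fun _ => s (Fin.last e))) := by
        simp only [symm', Finset.univ_unique, Finset.sum_singleton]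
        rw [D.act_X _ _ _ _ (fun _ => ha _)]
        have h4 : sgnc P.od (default : Equiv.Perm (Fin 1)) (fun _ => a (Fin.last e)) = 0 := by
          simp [sgnc]
        rw [h4, pow_zero, one_smul]
        rfl
      have happ : ∀ {α : Type} (f : Fin (e + 1) → α),
          Fin.append (f ∘ Fin.castSucc) (fun _ : Fin 1 => f (Fin.last e)) = f := by
        intro α f
        ext k
        refine Fin.addCases (fun k => ?_) (fun k => ?_) k
        · rw [Fin.append_left]; rfl
        · rw [Fin.append_right]
          have : k = 0 := Subsingleton.elim _ _
          subst this; rfl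
      rw [starIter, starIter_eq D e (a ∘ Fin.castSucc) _ _ (fun k => ha _), hX,
        star_symm D (a ∘ Fin.castSucc) _ _ (fun _ => a (Fin.last e)) _ _
          (fun k => ha _) (fun _ => ha _), happ, happ, happ]

theorem mco_append {d e : ℕ} (b : Fin d → β) (r s : Fin d → Fin n) (c : Fin e → β)
    (t u : Fin e → Fin n) (w : β × Fin n × Fin n) :
    mco (Fin.append b c) (Fin.append r t) (Fin.append s u) w = mco b r s w + mco c t u w := by
  simp only [mco, Finset.card_filter, Fin.sum_univ_add, Fin.append_left, Fin.append_right]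

theorem facSel_ne_zero (sel : β → Prop) {d : ℕ} (b : Fin d → β) (r s : Fin d → Fin n) :
    facSel sel b r s ≠ 0 :=
  Finset.prod_ne_zero_iff.2 fun _ _ => Nat.factorial_ne_zero _

theorem facSel_eq_s6 (sel : β → Prop) {d : ℕ} (b : Fin d → β) (r s : Fin d → Fin n)
    (S : Finset (β × Fin n × Fin n)) (hS : ∀ k, (b k, r k, s k) ∈ S) :
    facSel sel b r s = ∏ w ∈ S.filter (fun w => sel w.1), Nat.factorial (mco b r s w) := by
  unfold facSel
  refine Finset.prod_subset ?_ ?_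
  · refine Finset.filter_subset_filter _ ?_
    intro w hw
    obtain ⟨k, _, rfl⟩ := Finset.mem_image.1 hw
    exact hS k
  · intro w hw hw'
    have : mco b r s w = 0 := by
      unfold mco
      rw [Finset.card_eq_zero, Finset.filter_eq_empty_iff]
      intro k _ hk
      refine hw' (Finset.mem_filter.2 ⟨?_, (Finset.mem_filter.1 hw).2⟩)
      exact Finset.mem_image.2 ⟨k, Finset.mem_univ _, hk⟩
    rw [this, Nat.factorial_zero]

theorem facSel_dvd (sel : β → Prop) {d e : ℕ} (b : Fin d → β) (r s : Fin d → Fin n)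
    (c : Fin e → β) (t u : Fin e → Fin n) :
    facSel sel b r s * facSel sel c t u
      ∣ facSel sel (Fin.append b c) (Fin.append r t) (Fin.append s u) := by
  let S : Finset (β × Fin n × Fin n) :=
    (univ.image fun k => (b k, r k, s k)) ∪ (univ.image fun k => (c k, t k, u k))
  have hS1 : ∀ k, (b k, r k, s k) ∈ S := fun k =>
    Finset.mem_union_left _ (Finset.mem_image_of_mem _ (Finset.mem_univ k))
  have hS2 : ∀ k, (c k, t k, u k) ∈ S := fun k =>
    Finset.mem_union_right _
      (Finset.mem_image_of_mem (fun k => (c k, t k, u k)) (Finset.mem_univ k))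
  rw [facSel_eq_s6 sel b r s S hS1, facSel_eq_s6 sel c t u S hS2,
    facSel_eq_s6 sel (Fin.append b c) (Fin.append r t) (Fin.append s u) S ?_,
    ← Finset.prod_mul_distrib]
  · refine Finset.prod_dvd_prod_of_dvd _ _ fun w _ => ?_
    rw [mco_append]
    exact Nat.factorial_mul_factorial_dvd_factorial_add _ _
  · intro k
    refine Fin.addCases (fun k => ?_) (fun k => ?_) k <;> simp [hS1, hS2]

theorem facSel_split (P : GoodPair 𝕜 A β) {d : ℕ} (b : Fin d → β) (r s : Fin d → Fin n)
    (h : IsTriB P b r s) :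
    facSel (fun _ => True) b r s
      = facSel (fun i => P.part i = 0) b r s * facSel (fun i => P.part i = 1) b r s := by
  unfold facSel
  rw [Finset.prod_filter, Finset.prod_filter, Finset.prod_filter, ← Finset.prod_mul_distrib]
  refine Finset.prod_congr rfl fun w _ => ?_
  have : P.part w.1 = 0 ∨ P.part w.1 = 1 ∨ P.part w.1 = 2 := by
    generalize P.part w.1 = x; fin_cases x <;> simp
  rcases this with h0 | h0 | h0
  · simp [h0]
  · simp [h0]
  · have : mco b r s w ≤ 1 := by
      unfold mco
      rw [Finset.card_le_one]
      intro k hk l hl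
      simp only [mem_filter, mem_univ, true_and] at hk hl
      by_contra hne
      refine h k l hne (hk.trans hl.symm) ?_
      rw [← h0, ← hk]
    simp [h0, Nat.factorial_eq_one.2 this]

end aux

/-- Let `(𝐛,𝐫,𝐬) ∈ Tri^B(n,d)`, `(𝐜,𝐭,𝐮) ∈ Tri^B(n,e)`.  Then
(i) `ξ^{b_1}_{r_1,s_1} * ⋯ * ξ^{b_d}_{r_d,s_d} = [𝐛,𝐫,𝐬]^! • ξ^𝐛_{𝐫,𝐬}`;
(ii) if the concatenation lies in `Tri^B(n,d+e)` then `[𝐛,𝐫,𝐬]^!·[𝐜,𝐭,𝐮]^!`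
divides `[𝐛𝐜,𝐫𝐭,𝐬𝐮]^!` and
`ξ^𝐛_{𝐫,𝐬} * ξ^𝐜_{𝐭,𝐮} = ([𝐛𝐜,𝐫𝐭,𝐬𝐮]^!/([𝐛,𝐫,𝐬]^![𝐜,𝐭,𝐮]^!)) • ξ^{𝐛𝐜}_{𝐫𝐭,𝐬𝐮}`,
otherwise the `*`-product is `0`; (iii) the same for the `η`'s with `[·]^!` replaced by
`[·]^!_𝔞`. -/
theorem statement6 {𝕜 A β : Type} [CommRing 𝕜] [IsDomain 𝕜] [CharZero 𝕜]
    [NonUnitalRing A] [Module 𝕜 A] [SMulCommClass 𝕜 A A] [IsScalarTower 𝕜 A A]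
    {n : ℕ} (hn : 0 < n) {T : ℕ → Type} [∀ e, NonUnitalRing (T e)] [∀ e, Module 𝕜 (T e)]
    (P : GoodPair 𝕜 A β) (D : Tower 𝕜 A β n T P) (ord : LinearOrder (A × Fin n × Fin n))
    (d e : ℕ) (b : Fin d → β) (r s : Fin d → Fin n) (c : Fin e → β) (t u : Fin e → Fin n)
    (hbrs : IsTriB P b r s) (hctu : IsTriB P c t u) :
    (starIter D d (fun k => P.bas (b k)) r s
        = facSel (fun _ => True) b r s • xiB D ord b r s) ∧
    (IsTriB P (Fin.append b c) (Fin.append r t) (Fin.append s u) →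
      (facSel (fun _ => True) b r s * facSel (fun _ => True) c t u
          ∣ facSel (fun _ => True) (Fin.append b c) (Fin.append r t) (Fin.append s u)) ∧
      D.star (xiB D ord b r s) (xiB D ord c t u)
        = (facSel (fun _ => True) (Fin.append b c) (Fin.append r t) (Fin.append s u) /
            (facSel (fun _ => True) b r s * facSel (fun _ => True) c t u)) •
            xiB D ord (Fin.append b c) (Fin.append r t) (Fin.append s u)) ∧
    (¬ IsTriB P (Fin.append b c) (Fin.append r t) (Fin.append s u) →
      D.star (xiB D ord b r s) (xiB D ord c t u) = 0) ∧
    (IsTriB P (Fin.append b c) (Fin.append r t) (Fin.append s u) →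
      (facSel (fun i => P.part i = 0) b r s * facSel (fun i => P.part i = 0) c t u
          ∣ facSel (fun i => P.part i = 0) (Fin.append b c) (Fin.append r t) (Fin.append s u)) ∧
      D.star (eta D ord b r s) (eta D ord c t u)
        = (facSel (fun i => P.part i = 0) (Fin.append b c) (Fin.append r t) (Fin.append s u) /
            (facSel (fun i => P.part i = 0) b r s * facSel (fun i => P.part i = 0) c t u)) •
            eta D ord (Fin.append b c) (Fin.append r t) (Fin.append s u)) ∧
    (¬ IsTriB P (Fin.append b c) (Fin.append r t) (Fin.append s u) →
      D.star (eta D ord b r s) (eta D ord c t u) = 0) := by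
  have hstar : (facSel (fun _ => True) b r s * facSel (fun _ => True) c t u) •
      D.star (xiB D ord b r s) (xiB D ord c t u)
      = symm' D (D.X (fun k => P.bas (Fin.append b c k)) (Fin.append r t) (Fin.append s u)) := by
    have h1 := star_symm D (fun k => P.bas (b k)) r s (fun k => P.bas (c k)) t u
      (fun k => homog_bas P _) (fun k => homog_bas P _)
    have h2 : Fin.append (fun k => P.bas (b k)) (fun k => P.bas (c k))
        = fun k => P.bas (Fin.append b c k) := by
      ext k
      refine Fin.addCases (fun k => ?_) (fun k => ?_) k <;> simp
    rw [symm_tri D ord b r s hbrs, symm_tri D ord c t u hctu, map_nsmul, map_nsmul,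
      LinearMap.smul_apply, smul_smul, h2, mul_comm] at h1
    exact h1
  have hne : facSel (fun _ => True) b r s * facSel (fun _ => True) c t u ≠ 0 :=
    mul_ne_zero (facSel_ne_zero _ _ _ _) (facSel_ne_zero _ _ _ _)
  have heta : D.star (eta D ord b r s) (eta D ord c t u)
      = (facSel (fun i => P.part i = 1) b r s * facSel (fun i => P.part i = 1) c t u) •
        D.star (xiB D ord b r s) (xiB D ord c t u) := by
    rw [eta, eta, map_nsmul, map_nsmul, LinearMap.smul_apply, smul_smul, mul_comm]
  have hzero : ¬ IsTriB P (Fin.append b c) (Fin.append r t) (Fin.append s u) →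
      D.star (xiB D ord b r s) (xiB D ord c t u) = 0 := by
    intro h
    refine nsmul_cancel D hne ?_
    rw [hstar, symm_not_tri D _ _ _ h, smul_zero]
  refine ⟨?_, ?_, hzero, ?_, ?_⟩
  · rw [starIter_eq D d _ _ _ (fun k => homog_bas P _), symm_tri D ord b r s hbrs]
  · intro h
    refine ⟨facSel_dvd _ _ _ _ _ _ _, nsmul_cancel D hne ?_⟩
    rw [hstar, symm_tri D ord _ _ _ h, smul_smul, Nat.mul_div_cancel' (facSel_dvd _ _ _ _ _ _ _)]
  · intro h
    refine ⟨facSel_dvd _ _ _ _ _ _ _, nsmul_cancel D (mul_ne_zero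
      (facSel_ne_zero (fun i => P.part i = 0) b r s)
      (facSel_ne_zero (fun i => P.part i = 0) c t u)) ?_⟩
    rw [smul_smul, Nat.mul_div_cancel' (facSel_dvd _ _ _ _ _ _ _), heta, smul_smul, eta, smul_smul,
      ← facSel_split P _ _ _ h, ← symm_tri D ord _ _ _ h, ← hstar, facSel_split P b r s hbrs,
      facSel_split P c t u hctu]
    congr 1
    ring
  · intro h
    rw [heta, hzero h, smul_zero]
end GS
end
end
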